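/- arXiv:1810.10849 — 2 statements merged into one kernel-verified Lean document; each statement's English description precedes it below -/
import Mathlib

section
/- Let N > 0 and let K_N : L²(ℝ^d) → ℓ²(ℤ^d) be the bounded linear operator defined by (K_N g)_n := −⟨g, f_{N,n}⟩ for g ∈ L²(ℝ^d) and n ∈ ℤ^d. Then the operator norm of K_N equals N^{−d/2}. -/
open MeasureTheory Filter Topology Metric ENNReal NNReal

noncomputable section

/-- `sinc` with value 1 at 0. -/
def sinc' (x : ℝ) : ℝ := if x = 0 then 1 else Real.sin x / x

/-- The function `f_{N,n}(x) = ∏_j sin (π (N x_j - n_j)) / (π (N x_j - n_j))`. -/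
def fN (d : ℕ) (N : ℝ) (n : Fin d → ℤ) (x : EuclideanSpace ℝ (Fin d)) : ℝ :=
  ∏ j, sinc' (Real.pi * (N * x j - n j))

/-- The lattice point `n / N` in `ℝ^d`. -/
def latticePt (d : ℕ) (N : ℝ) (n : Fin d → ℤ) : EuclideanSpace ℝ (Fin d) :=
  WithLp.toLp 2 fun j => (n j : ℝ) / N

/-- The heat solution at time `t > 0` with initial datum `u₀ ∈ L²(ℝ^d)`:
`u(t,x) = (4πt)^{-d/2} ∫ e^{-|x-y|²/(4t)} u₀(y) dy`. -/
def heatSol (d : ℕ) (u₀ : EuclideanSpace ℝ (Fin d) → ℝ) (t : ℝ)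
    (x : EuclideanSpace ℝ (Fin d)) : ℝ :=
  (4 * Real.pi * t) ^ (-(d : ℝ) / 2) * ∫ y, Real.exp (-‖x - y‖ ^ 2 / (4 * t)) * u₀ y

/-- The family `F` is summable in `L²(ℝ^d)` with sum `g`: the finite partial sums
converge to `g` in the `L²` norm along the filter of finite subsets of `ℤ^d`. -/
def HasSumL2 (d : ℕ) {V : Type} [NormedAddCommGroup V]
    (F : (Fin d → ℤ) → EuclideanSpace ℝ (Fin d) → V)
    (g : EuclideanSpace ℝ (Fin d) → V) : Prop :=
  Tendsto (fun s : Finset (Fin d → ℤ) =>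
    eLpNorm (fun x => g x - ∑ n ∈ s, F n x) 2 volume) atTop (𝓝 0)

/-- The closed cube `Q_r(0)` in `ℝ^d`, centered at the origin, of side length `2r`. -/
def Qcube (d : ℕ) (r : ℝ) : Set (EuclideanSpace ℝ (Fin d)) := {ξ | ∀ j, |ξ j| ≤ r}

/-- The truncated Fourier integral, with the paper's normalization
`(2π)^{-d/2} ∫_{|x| ≤ R} e^{-i x·ξ} f(x) dx`. -/
def truncFT (d : ℕ) (f : EuclideanSpace ℝ (Fin d) → ℂ) (R : ℝ)
    (ξ : EuclideanSpace ℝ (Fin d)) : ℂ :=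
  (((2 * Real.pi) ^ (-(d : ℝ) / 2) : ℝ) : ℂ) *
    ∫ x in closedBall (0 : EuclideanSpace ℝ (Fin d)) R,
      Complex.exp (-(Complex.I * ((inner ℝ x ξ : ℝ) : ℂ))) * f x

/-- `fhat` is the Fourier transform of `f ∈ L²(ℝ^d)` in the `L²` (Plancherel) sense:
`fhat ∈ L²` and the Fourier integrals of the truncations of `f` converge to `fhat`
in the `L²` norm. -/
def IsL2Fourier (d : ℕ) (f fhat : EuclideanSpace ℝ (Fin d) → ℂ) : Prop :=
  MemLp fhat 2 volume ∧
    Tendsto (fun R : ℝ => eLpNorm (fun ξ => fhat ξ - truncFT d f R ξ) 2 volume)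
      atTop (𝓝 0)

/-- The `L²(ℝ^d)` norm of a function, as a real number. -/
def l2norm (d : ℕ) {V : Type} [NormedAddCommGroup V]
    (f : EuclideanSpace ℝ (Fin d) → V) : ℝ :=
  (eLpNorm f 2 volume).toReal

/-!
A box of side one, modulated to frequency `a`, has the cardinal sine centred at `a` as its Fourier
transform. Plancherel's theorem turns the inner product of two such cardinal sines into the
integral of a modulated box, which is again a value of `sinc`, and `sinc (π m)` vanishes at nonzero
integers `m`. After rescaling and taking products over the coordinates, the functions `f_{N,n}` are
orthogonal of norm `N^{-d/2}`. Bessel's inequality then bounds the norm of `K_N` above by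
`N^{-d/2}`, and `K_N` attains this value at each normalized `f_{N,n}`.
-/

section InnerToLp

variable {𝕜 α E : Type*} [RCLike 𝕜] [MeasurableSpace α] {μ : Measure α} [NormedAddCommGroup E]
  [InnerProductSpace 𝕜 E] {f g : α → E}

theorem inner_toLp_left (hf : MemLp f 2 μ) (g : Lp E 2 μ) :
    inner 𝕜 (hf.toLp f) g = ∫ x, inner 𝕜 (f x) (g x) ∂μ := by
  refine integral_congr_ae ?_
  filter_upwards [hf.coeFn_toLp] with x hx
  rw [hx]

theorem inner_toLp_toLp (hf : MemLp f 2 μ) (hg : MemLp g 2 μ) :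
    inner 𝕜 (hf.toLp f) (hg.toLp g) = ∫ x, inner 𝕜 (f x) (g x) ∂μ := by
  rw [inner_toLp_left]
  refine integral_congr_ae ?_
  filter_upwards [hg.coeFn_toLp] with x hx
  rw [hx]

end InnerToLp

section Plancherel

open SchwartzMap FourierTransform

variable {E F : Type*} [NormedAddCommGroup E] [InnerProductSpace ℝ E] [FiniteDimensional ℝ E]
  [MeasurableSpace E] [BorelSpace E]
  [NormedAddCommGroup F] [InnerProductSpace ℂ F] [CompleteSpace F] {f g : E → F}

theorem integral_schwartz_smul_fourier_toLp (hf : MemLp f 2) (hf₁ : Integrable f) (φ : 𝓢(E, ℂ)) :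
    ∫ x, φ x • (𝓕 (hf.toLp f) : Lp F 2 (volume : Measure E)) x = ∫ x, φ x • 𝓕 f x :=
  calc ∫ x, φ x • (𝓕 (hf.toLp f) : Lp F 2 (volume : Measure E)) x
      = ∫ x, 𝓕 φ x • hf.toLp f x := by
        rw [← Lp.toTemperedDistribution_apply, ← Lp.fourier_toTemperedDistribution_eq,
          TemperedDistribution.fourier_apply, Lp.toTemperedDistribution_apply]
    _ = ∫ x, 𝓕 (φ : E → ℂ) x • f x := by
        refine integral_congr_ae ?_
        filter_upwards [hf.coeFn_toLp] with x hx
        rw [hx, SchwartzMap.fourier_coe]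
    _ = ∫ x, φ x • 𝓕 f x := by
        simpa using! VectorFourier.integral_fourierIntegral_smul_eq_flip (L := innerₗ E)
          Real.continuous_fourierChar continuous_inner φ.integrable hf₁

theorem fourier_toLp_ae_eq (hf : MemLp f 2) (hf₁ : Integrable f) :
    (𝓕 (hf.toLp f) : Lp F 2 (volume : Measure E)) =ᵐ[volume] 𝓕 f := by
  have continuous_fourier : Continuous (𝓕 f) :=
    VectorFourier.fourierIntegral_continuous Real.continuous_fourierChar continuous_inner hf₁
  refine ae_eq_of_integral_contDiff_smul_eq ((Lp.memLp _).locallyIntegrable one_le_two)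
    continuous_fourier.locallyIntegrable fun φ φ_smooth φ_supp => ?_
  have supp : HasCompactSupport (Complex.ofRealCLM ∘ φ) := φ_supp.comp_left rfl
  have smooth := Complex.ofRealCLM.contDiff.comp φ_smooth
  simpa using integral_schwartz_smul_fourier_toLp hf hf₁ (supp.toSchwartzMap smooth)

theorem memLp_two_fourier (hf : MemLp f 2) (hf₁ : Integrable f) : MemLp (𝓕 f) 2 :=
  (memLp_congr_ae (fourier_toLp_ae_eq hf hf₁)).1 (Lp.memLp _)

theorem integral_inner_fourier_fourier_of_memLp_two (hf : MemLp f 2) (hf₁ : Integrable f)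
    (hg : MemLp g 2) (hg₁ : Integrable g) :
    ∫ ξ, inner ℂ (𝓕 f ξ) (𝓕 g ξ) = ∫ x, inner ℂ (f x) (g x) :=
  calc ∫ ξ, inner ℂ (𝓕 f ξ) (𝓕 g ξ)
      = inner ℂ (𝓕 (hf.toLp f)) (𝓕 (hg.toLp g)) := by
        refine integral_congr_ae ?_
        filter_upwards [fourier_toLp_ae_eq hf hf₁, fourier_toLp_ae_eq hg hg₁] with ξ hfξ hgξ
        rw [hfξ, hgξ]
    _ = inner ℂ (hf.toLp f) (hg.toLp g) := Lp.inner_fourier_eq _ _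
    _ = ∫ x, inner ℂ (f x) (g x) := inner_toLp_toLp hf hg

end Plancherel

section Sinc

open FourierTransform Real

theorem integral_fourierChar_mul_eq_sinc (a : ℝ) :
    ∫ t in (-(1 / 2) : ℝ)..1 / 2, (𝐞 (a * t) : ℂ) = sinc (π * a) := by
  rcases eq_or_ne a 0 with rfl | ha
  · norm_num
  have hc : 2 * π * a ≠ 0 := by positivity
  calc ∫ t in (-(1 / 2) : ℝ)..1 / 2, (𝐞 (a * t) : ℂ)
      = ∫ t in (-(1 / 2) : ℝ)..1 / 2, Complex.exp ((2 * π * a * t : ℝ) * Complex.I) := by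
        simp only [fourierChar_apply, ← mul_assoc]
    _ = (2 * π * a)⁻¹ • ∫ t in -(π * a)..π * a, Complex.exp (t * Complex.I) := by
        rw [intervalIntegral.integral_comp_mul_left (fun t : ℝ => Complex.exp (t * Complex.I)) hc]
        congr 2 <;> ring
    _ = sinc (π * a) := by
        rw [integral_exp_mul_I_eq_sinc, Complex.real_smul]
        norm_cast
        field_simp

/-- The character of frequency `a` cut off to the unit interval centred at `0`; its Fourier
transform is the cardinal sine centred at `a`. The interval is half-open to agree with interval
integrals. -/
def modulatedBox (a : ℝ) : ℝ → ℂ :=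
  Set.indicator (Set.Ioc (-(1 / 2)) (1 / 2)) fun t => 𝐞 (a * t)

theorem memLp_modulatedBox (a : ℝ) (p : ℝ≥0∞) : MemLp (modulatedBox a) p := by
  have continuous_char : Continuous fun t : ℝ => (𝐞 (a * t) : ℂ) := by fun_prop
  rw [modulatedBox, memLp_indicator_iff_restrict measurableSet_Ioc]
  exact .of_bound continuous_char.aestronglyMeasurable 1
    (.of_forall fun t => (Circle.norm_coe _).le)

theorem integrable_modulatedBox (a : ℝ) : Integrable (modulatedBox a) :=
  memLp_one_iff_integrable.1 (memLp_modulatedBox a 1)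

theorem integral_modulatedBox (a : ℝ) : ∫ t, modulatedBox a t = sinc (π * a) := by
  rw [← integral_fourierChar_mul_eq_sinc, intervalIntegral.integral_of_le (by norm_num),
    ← integral_indicator measurableSet_Ioc]
  rfl

theorem fourierChar_smul_modulatedBox (a b t : ℝ) :
    𝐞 (a * t) • modulatedBox b t = modulatedBox (a + b) t := by
  simp only [modulatedBox, Set.indicator_apply]
  split_ifs
  · simp [Circle.smul_def, add_mul, AddChar.map_add_eq_mul]
  · exact smul_zero _

theorem inner_modulatedBox (a b t : ℝ) :
    inner ℂ (modulatedBox a t) (modulatedBox b t) = modulatedBox (b - a) t := by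
  simp only [modulatedBox, Set.indicator_apply]
  split_ifs
  · simp [sub_mul, AddChar.map_sub_eq_div, div_eq_mul_inv, ← Circle.coe_inv_eq_conj]
  · exact inner_zero_left _

theorem fourier_modulatedBox (a ξ : ℝ) : 𝓕 (modulatedBox a) ξ = sinc (π * (ξ - a)) :=
  calc 𝓕 (modulatedBox a) ξ
      = ∫ t, 𝐞 (-ξ * t) • modulatedBox a t := by
        rw [fourier_real_eq]
        simp only [mul_comm ξ, neg_mul]
    _ = sinc (π * (-ξ + a)) := by
        simp only [fourierChar_smul_modulatedBox, integral_modulatedBox]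
    _ = sinc (π * (ξ - a)) := by
        rw [← sinc_neg]
        congr 2
        ring

theorem memLp_sinc_sub (a : ℝ) : MemLp (fun x => sinc (π * (x - a))) 2 := by
  have h := memLp_two_fourier (memLp_modulatedBox a 2) (integrable_modulatedBox a)
  simp only [funext (fourier_modulatedBox a)] at h
  simpa using h.re

theorem integral_sinc_sub_mul_sinc_sub (a b : ℝ) :
    ∫ x, sinc (π * (x - a)) * sinc (π * (x - b)) = sinc (π * (b - a)) := by
  have plancherel := integral_inner_fourier_fourier_of_memLp_two
    (memLp_modulatedBox a 2) (integrable_modulatedBox a)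
    (memLp_modulatedBox b 2) (integrable_modulatedBox b)
  simp only [inner_modulatedBox, integral_modulatedBox] at plancherel
  simp only [fourier_modulatedBox, RCLike.inner_apply, Complex.conj_ofReal] at plancherel
  simp only [mul_comm (sinc (π * (_ - a)))]
  exact_mod_cast plancherel

theorem sinc_pi_mul_intCast (m : ℤ) : sinc (π * m) = if m = 0 then 1 else 0 := by
  split_ifs with hm
  · simp [hm]
  · rw [sinc_of_ne_zero (by positivity), mul_comm, sin_int_mul_pi, zero_div]

-- At `N = 0` this holds by convention: divergent integrals and `0⁻¹` are both `0`.
theorem integral_sinc_mul_sinc (N : ℝ) (n m : ℤ) :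
    ∫ x, sinc (π * (N * x - n)) * sinc (π * (N * x - m)) = if n = m then |N|⁻¹ else 0 := by
  rw [Measure.integral_comp_mul_left (fun x => sinc (π * (x - n)) * sinc (π * (x - m))) N,
    integral_sinc_sub_mul_sinc_sub, ← Int.cast_sub, sinc_pi_mul_intCast, abs_inv]
  simp only [sub_eq_zero, eq_comm (a := m), smul_eq_mul, mul_ite, mul_one, mul_zero]

theorem integrable_sinc_mul_sinc {N : ℝ} (hN : N ≠ 0) (a b : ℝ) :
    Integrable fun x => sinc (π * (N * x - a)) * sinc (π * (N * x - b)) :=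
  ((memLp_sinc_sub a).integrable_mul (memLp_sinc_sub b)).comp_mul_left' hN

end Sinc

section SamplingFunctions

variable {d : ℕ} {N : ℝ}

theorem sinc'_eq_sinc : sinc' = Real.sinc := rfl

theorem continuous_fN (n : Fin d → ℤ) : Continuous (fN d N n) := by
  unfold fN
  rw [sinc'_eq_sinc]
  exact continuous_finsetProd _ fun j _ => Real.continuous_sinc.comp (by fun_prop)

theorem fN_mul_fN_toLp (n m : Fin d → ℤ) (y : Fin d → ℝ) :
    fN d N n (WithLp.toLp 2 y) * fN d N m (WithLp.toLp 2 y) =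
      ∏ j, Real.sinc (Real.pi * (N * y j - n j)) * Real.sinc (Real.pi * (N * y j - m j)) := by
  simp only [fN, sinc'_eq_sinc, Finset.prod_mul_distrib]

theorem integrable_fN_mul_fN (hN : N ≠ 0) (n m : Fin d → ℤ) :
    Integrable fun x => fN d N n x * fN d N m x := by
  rw [← (PiLp.volume_preserving_toLp (Fin d)).integrable_comp_emb
    (MeasurableEquiv.toLp 2 (Fin d → ℝ)).measurableEmbedding]
  simp only [Function.comp_def, fN_mul_fN_toLp]
  exact Integrable.fintype_prod fun j => integrable_sinc_mul_sinc hN (n j) (m j)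

theorem integral_fN_mul_fN (n m : Fin d → ℤ) :
    ∫ x, fN d N n x * fN d N m x = if n = m then (|N| ^ d)⁻¹ else 0 := by
  rw [← (PiLp.volume_preserving_toLp (Fin d)).integral_comp
    (MeasurableEquiv.toLp 2 (Fin d → ℝ)).measurableEmbedding]
  simp only [fN_mul_fN_toLp]
  rw [integral_fintype_prod_volume_eq_prod fun j x =>
    Real.sinc (Real.pi * (N * x - n j)) * Real.sinc (Real.pi * (N * x - m j))]
  simp only [integral_sinc_mul_sinc, Finset.prod_ite_zero, Finset.mem_univ, forall_const,
    funext_iff, Finset.prod_const, Finset.card_univ, Fintype.card_fin, inv_pow]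

theorem memLp_fN (hN : N ≠ 0) (n : Fin d → ℤ) : MemLp (fN d N n) 2 := by
  rw [memLp_two_iff_integrable_sq (continuous_fN n).aestronglyMeasurable]
  simpa only [sq] using integrable_fN_mul_fN hN n n

/-- The function `f_{N,n}` scaled to norm one, as an element of `L²(ℝ^d)`. -/
def normalizedFN (hN : N ≠ 0) (n : Fin d → ℤ) :
    Lp ℝ 2 (volume : Measure (EuclideanSpace ℝ (Fin d))) :=
  |N| ^ ((d : ℝ) / 2) • (memLp_fN hN n).toLp (fN d N n)

theorem inner_normalizedFN (hN : N ≠ 0) (n : Fin d → ℤ)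
    (g : Lp ℝ 2 (volume : Measure (EuclideanSpace ℝ (Fin d)))) :
    inner ℝ (normalizedFN hN n) g = |N| ^ ((d : ℝ) / 2) * ∫ x, g x * fN d N n x := by
  simp only [normalizedFN, real_inner_smul_left, inner_toLp_left, RCLike.inner_apply, conj_trivial]

theorem orthonormal_normalizedFN (hN : N ≠ 0) :
    Orthonormal ℝ (normalizedFN (d := d) hN) := by
  rw [orthonormal_iff_ite]
  intro n m
  have inner_toLp_fN : inner ℝ ((memLp_fN hN n).toLp _) ((memLp_fN hN m).toLp _) =
      if n = m then (|N| ^ d)⁻¹ else 0 := by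
    simp only [inner_toLp_toLp, RCLike.inner_apply', conj_trivial, integral_fN_mul_fN]
  have scale_sq : |N| ^ ((d : ℝ) / 2) * |N| ^ ((d : ℝ) / 2) = |N| ^ d := by
    rw [← Real.rpow_add (abs_pos.2 hN), add_halves, Real.rpow_natCast]
  rw [normalizedFN, normalizedFN, real_inner_smul_left, real_inner_smul_right, inner_toLp_fN,
    ← mul_assoc, scale_sq]
  have : |N| ^ d ≠ 0 := by positivity
  split_ifs <;> simp [this]

end SamplingFunctions

theorem opNorm_eq_of_norm_apply_eq_mul_norm_inner {𝕜 E ι : Type*} [RCLike 𝕜] [NormedAddCommGroup E]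
    [InnerProductSpace 𝕜 E] [Nonempty ι] {e : ι → E} (he : Orthonormal 𝕜 e)
    {K : E →L[𝕜] lp (fun _ : ι => 𝕜) 2} {r : ℝ} (hr : 0 ≤ r)
    (hK : ∀ g i, ‖K g i‖ = r * ‖inner 𝕜 (e i) g‖) : ‖K‖ = r := by
  apply le_antisymm
  · refine K.opNorm_le_bound hr fun g => lp.norm_le_of_forall_sum_le (by norm_num) (by positivity)
      fun s => ?_
    simp only [hK, ENNReal.toReal_ofNat, Real.rpow_two, mul_pow, ← Finset.mul_sum]
    gcongr
    exact he.sum_inner_products_le g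
  · obtain ⟨i⟩ := ‹Nonempty ι›
    calc r = ‖K (e i) i‖ := by simp [hK, inner_self_eq_norm_sq_to_K, he.1 i]
      _ ≤ ‖K (e i)‖ := lp.norm_apply_le_norm (by norm_num) _ _
      _ ≤ ‖K‖ := by simpa [he.1 i] using K.le_opNorm (e i)

/-- The feedback law `K_N : L²(ℝ^d) → ℓ²(ℤ^d)`, `(K_N g)_n = -⟨g, f_{N,n}⟩`, is a bounded
linear operator of operator norm exactly `N^{-d/2}`. -/
theorem statement17 (d : ℕ) (hd : 0 < d) (N : ℝ) (hN : 0 < N)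
    (K : Lp ℝ 2 (volume : Measure (EuclideanSpace ℝ (Fin d))) →L[ℝ]
          lp (fun _ : Fin d → ℤ => ℝ) 2)
    (hK : ∀ g : Lp ℝ 2 (volume : Measure (EuclideanSpace ℝ (Fin d))),
      ∀ n : Fin d → ℤ, K g n = -∫ x, g x * fN d N n x) :
    ‖K‖ = N ^ (-(d : ℝ) / 2) := by
  refine opNorm_eq_of_norm_apply_eq_mul_norm_inner (orthonormal_normalizedFN hN.ne')
    (by positivity) fun g n => ?_
  have scale_cancel : N ^ (-(d : ℝ) / 2) * N ^ ((d : ℝ) / 2) = 1 := by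
    rw [← Real.rpow_add hN, neg_div, neg_add_cancel, Real.rpow_zero]
  rw [hK, norm_neg, inner_normalizedFN, norm_mul, abs_of_pos hN,
    Real.norm_of_nonneg (Real.rpow_nonneg hN.le _), ← mul_assoc, scale_cancel, one_mul]
end
end

section
/- Fix 0 < τ < T. There is a constant C₁ = C₁(d) > 0 with the following property: for every ε ∈ (0,1), every y₀ ∈ L²(ℝ^d) and every N ≥ C₁ √( (1/(T−τ)) (1 + ln(1/ε)) ), setting v_n := −⟨ e^{τΔ}y₀, f_{N,n} ⟩ for n ∈ ℤ^d (where e^{τΔ}y₀ is the heat solution at time τ with initial datum y₀), the family ( v_n · G_{T−τ}(· − n/N) )_{n∈ℤ^d} is summable in L²(ℝ^d), and the state y(T,·) := e^{TΔ}y₀ + Σ_{n∈ℤ^d} v_n G_{T−τ}(· − n/N) satisfies ‖y(T,·)‖ ≤ ε ‖y₀‖, where G_t(x) := (4πt)^{−d/2} e^{−|x|²/(4t)} is the heat kernel. -/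
open MeasureTheory Filter Topology Metric ENNReal NNReal

noncomputable section

/-- The heat kernel `G_t(x) = (4πt)^{-d/2} e^{-|x|²/(4t)}`. -/
def heatKer (d : ℕ) (t : ℝ) (x : EuclideanSpace ℝ (Fin d)) : ℝ :=
  (4 * Real.pi * t) ^ (-(d : ℝ) / 2) * Real.exp (-‖x‖ ^ 2 / (4 * t))

/-!
The heat flow is studied through the inverse Fourier transform `w` of the state at time `τ`, on
which the evolution up to time `T` is multiplication by `m(ξ) = exp(-4π²(T-τ)|ξ|²)`. Since `f_{N,n}`
is band-limited, `-v_n` is the `n`-th Fourier coefficient, on the torus of side `N`, of `w`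
restricted to the frequency cube `Q = (-N/2, N/2]^d`. Since `G_{T-τ}(· - n/N)` is the Fourier
transform of `m` times the `n`-th character, the impulses produce minus the Fourier transform of
`m · w̃`, where `w̃` is the `N`-periodic extension of `w|_Q`. The final state is thus the Fourier
transform of `m · (w - w̃)`, which vanishes on `Q`. Off `Q` the symbol is small: splitting `Qᶜ` into
translates of `Q` bounds both `m w` and `m w̃` by a sum of Gaussians over the nonzero lattice
points, which decays exponentially in `(T-τ) N²`.
-/

open scoped FourierTransform Real RealInnerProductSpace

attribute [local instance] instMeasureSpaceUnitAddCircle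

section Plancherel

variable {V F : Type*} [NormedAddCommGroup V] [InnerProductSpace ℝ V] [FiniteDimensional ℝ V]
  [MeasurableSpace V] [BorelSpace V] [NormedAddCommGroup F] [InnerProductSpace ℂ F]
  [CompleteSpace F]

theorem fourier_toLp_ae_eq_s18 {φ : V → F} (hφ : Integrable φ) (hφ₂ : MemLp φ 2 volume) :
    (𝓕 (hφ₂.toLp φ) : V →₂[volume] F) =ᵐ[volume] 𝓕 φ := by
  have hcont : Continuous (𝓕 φ) :=
    VectorFourier.fourierIntegral_continuous Real.continuous_fourierChar
      (by exact continuous_inner) hφ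
  refine ae_eq_of_integral_contDiff_smul_eq ((Lp.memLp _).locallyIntegrable (by norm_num))
    hcont.locallyIntegrable fun g g_smooth g_cpt => ?_
  have hg_supp : HasCompactSupport (Complex.ofRealCLM ∘ g) := g_cpt.comp_left rfl
  have hg_smooth : ContDiff ℝ (⊤ : ℕ∞) (Complex.ofRealCLM ∘ g) := by fun_prop
  set G := hg_supp.toSchwartzMap hg_smooth
  -- The two Fourier transforms agree as tempered distributions, so test both against `G`.
  have htest : ∫ x, G x • (𝓕 (hφ₂.toLp φ) : V →₂[volume] F) x =
      ∫ x, (𝓕 G) x • (hφ₂.toLp φ) x := by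
    have h := congrArg (fun D => D G) (Lp.fourier_toTemperedDistribution_eq (hφ₂.toLp φ))
    simpa only [TemperedDistribution.fourier_apply, Lp.toTemperedDistribution_apply] using h.symm
  have hself_adjoint : ∫ x, (𝓕 (G : V → ℂ)) x • φ x = ∫ x, G x • 𝓕 φ x := by
    have h := VectorFourier.integral_fourierIntegral_smul_eq_flip (μ := (volume : Measure V))
      (ν := (volume : Measure V)) (L := innerₗ V) (f := G) (g := φ)
      Real.continuous_fourierChar (by exact continuous_inner) G.integrable hφ
    rwa [flip_innerₗ] at h
  have hG (x : V) (z : F) : g x • z = G x • z := (Complex.coe_smul (g x) z).symm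
  simp only [hG]
  rw [htest, ← hself_adjoint]
  refine integral_congr_ae ?_
  filter_upwards [hφ₂.coeFn_toLp] with x hx
  rw [hx, SchwartzMap.fourier_coe]

theorem integral_inner_fourier_fourier {φ : V → F} (hφ : Integrable φ) (hφ₂ : MemLp φ 2 volume)
    (w : V →₂[volume] F) :
    ∫ x, inner ℂ (𝓕 φ x) ((𝓕 w : V →₂[volume] F) x) =
      ∫ ξ, inner ℂ (φ ξ) (w ξ) := by
  have h := Lp.inner_fourier_eq (hφ₂.toLp φ) w
  rw [L2.inner_def, L2.inner_def] at h
  calc ∫ x, inner ℂ (𝓕 φ x) ((𝓕 w : V →₂[volume] F) x)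
      = ∫ x, inner ℂ ((𝓕 (hφ₂.toLp φ) : V →₂[volume] F) x)
          ((𝓕 w : V →₂[volume] F) x) := by
        refine integral_congr_ae ?_
        filter_upwards [fourier_toLp_ae_eq_s18 hφ hφ₂] with x hx
        rw [hx]
    _ = ∫ ξ, inner ℂ (hφ₂.toLp φ ξ) (w ξ) := h
    _ = ∫ ξ, inner ℂ (φ ξ) (w ξ) := by
        refine integral_congr_ae ?_
        filter_upwards [hφ₂.coeFn_toLp] with ξ hξ
        rw [hξ]

end Plancherel

section HeatSymbol

variable {V : Type*} [NormedAddCommGroup V]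

/-- The Fourier symbol `e^{-4π²t|ξ|²}` of `e^{tΔ}`, for the Fourier transform with kernel
`e^{-2πi⟨x, ξ⟩}`. -/
def heatSymbol (t : ℝ) (ξ : V) : ℝ := Real.exp (-(4 * π ^ 2 * t) * ‖ξ‖ ^ 2)

theorem heatSymbol_pos (t : ℝ) (ξ : V) : 0 < heatSymbol t ξ := Real.exp_pos _

theorem heatSymbol_le_one {t : ℝ} (ht : 0 ≤ t) (ξ : V) : heatSymbol t ξ ≤ 1 := by
  rw [heatSymbol, neg_mul, Real.exp_le_one_iff, neg_nonpos]
  positivity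

theorem heatSymbol_add (s t : ℝ) (ξ : V) :
    heatSymbol (s + t) ξ = heatSymbol s ξ * heatSymbol t ξ := by
  rw [heatSymbol, heatSymbol, heatSymbol, ← Real.exp_add]
  congr 1
  ring

@[fun_prop]
theorem continuous_heatSymbol (t : ℝ) : Continuous (heatSymbol t : V → ℝ) := by
  unfold heatSymbol
  fun_prop

theorem enorm_heatSymbol_mul_sq (t : ℝ) (ξ : V) (z : ℂ) :
    ‖(heatSymbol t ξ : ℂ) * z‖ₑ ^ 2 = ENNReal.ofReal (heatSymbol (2 * t) ξ) * ‖z‖ₑ ^ 2 := by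
  rw [enorm_mul, mul_pow, two_mul t, heatSymbol_add, ← sq,
    ENNReal.ofReal_pow (heatSymbol_pos t ξ).le, ← ofReal_norm, Complex.norm_real,
    Real.norm_of_nonneg (heatSymbol_pos t ξ).le]

theorem norm_heatSymbol_mul_le {t : ℝ} (ht : 0 ≤ t) (ξ : V) (z : ℂ) :
    ‖(heatSymbol t ξ : ℂ) * z‖ ≤ ‖z‖ := by
  rw [norm_mul, Complex.norm_real, Real.norm_of_nonneg (heatSymbol_pos t ξ).le]
  exact mul_le_of_le_one_left (norm_nonneg _) (heatSymbol_le_one ht ξ)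

section InnerProduct

variable [InnerProductSpace ℝ V]

/-- The frequency profile `e^{2πi⟨a, ξ⟩} e^{-4π²t|ξ|²}` of the heat kernel `G_t(· - a)`. -/
def heatKerSpectrum (t : ℝ) (a ξ : V) : ℂ := heatSymbol t ξ * 𝐞 ⟪a, ξ⟫

theorem continuous_heatKerSpectrum (t : ℝ) (a : V) : Continuous (heatKerSpectrum t a) := by
  unfold heatKerSpectrum
  fun_prop

theorem norm_heatKerSpectrum (t : ℝ) (a ξ : V) :
    ‖heatKerSpectrum t a ξ‖ = ‖heatSymbol t ξ‖ := by
  rw [heatKerSpectrum, norm_mul, Circle.norm_coe, mul_one, Complex.norm_real]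

end InnerProduct

variable [MeasurableSpace V] [BorelSpace V]

theorem memLp_heatSymbol_mul {μ : Measure V} {p : ℝ≥0∞} {t : ℝ} (ht : 0 ≤ t) {u : V → ℂ}
    (hu : MemLp u p μ) : MemLp (fun ξ => (heatSymbol t ξ : ℂ) * u ξ) p μ :=
  hu.of_le
    ((Complex.continuous_ofReal.comp (continuous_heatSymbol t)).measurable.aestronglyMeasurable.mul
      hu.1)
    (.of_forall fun ξ => norm_heatSymbol_mul_le ht ξ (u ξ))

variable [InnerProductSpace ℝ V] [FiniteDimensional ℝ V]

theorem integrable_heatSymbol {t : ℝ} (ht : 0 < t) : Integrable (heatSymbol t : V → ℝ) := by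
  have hb : 0 < ((4 * π ^ 2 * t : ℝ) : ℂ).re := by
    rw [Complex.ofReal_re]
    positivity
  have h := GaussianFourier.integrable_cexp_neg_mul_sq_norm_add hb 0 (0 : V)
  refine h.norm.congr (.of_forall fun ξ => ?_)
  simp only [heatSymbol, Complex.norm_exp, zero_mul, add_zero]
  norm_cast

theorem memLp_two_heatSymbol {t : ℝ} (ht : 0 < t) : MemLp (heatSymbol t : V → ℝ) 2 volume := by
  rw [memLp_two_iff_integrable_sq (continuous_heatSymbol t).aestronglyMeasurable]
  simp only [sq, ← heatSymbol_add]
  exact integrable_heatSymbol (by positivity)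

theorem integrable_heatSymbol_mul {t : ℝ} (ht : 0 < t) {u : V → ℂ} (hu : MemLp u 2 volume) :
    Integrable (fun ξ => (heatSymbol t ξ : ℂ) * u ξ) :=
  (memLp_two_heatSymbol ht).ofReal.integrable_mul hu

theorem integrable_heatKerSpectrum {t : ℝ} (ht : 0 < t) (a : V) :
    Integrable (heatKerSpectrum t a) :=
  (integrable_heatSymbol ht).mono (continuous_heatKerSpectrum t a).aestronglyMeasurable
    (.of_forall fun ξ => (norm_heatKerSpectrum t a ξ).le)

theorem memLp_two_heatKerSpectrum {t : ℝ} (ht : 0 < t) (a : V) :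
    MemLp (heatKerSpectrum t a) 2 volume :=
  (memLp_two_heatSymbol ht).of_le (continuous_heatKerSpectrum t a).aestronglyMeasurable
    (.of_forall fun ξ => (norm_heatKerSpectrum t a ξ).le)

/-- Multiplication by `heatSymbol t` on `L²`, that is, the heat flow on the Fourier side. -/
def heatMul {t : ℝ} (ht : 0 ≤ t) (u : V →₂[volume] ℂ) : V →₂[volume] ℂ :=
  (memLp_heatSymbol_mul ht (Lp.memLp u)).toLp

theorem coeFn_heatMul {t : ℝ} (ht : 0 ≤ t) (u : V →₂[volume] ℂ) :
    heatMul ht u =ᵐ[volume] fun ξ => (heatSymbol t ξ : ℂ) * u ξ :=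
  MemLp.coeFn_toLp _

theorem norm_heatMul_le {t : ℝ} (ht : 0 ≤ t) (u : V →₂[volume] ℂ) :
    ‖heatMul ht u‖ ≤ ‖u‖ := by
  refine Lp.norm_le_norm_of_ae_le ?_
  filter_upwards [coeFn_heatMul ht u] with ξ hξ
  rw [hξ]
  exact norm_heatSymbol_mul_le ht ξ (u ξ)

theorem heatMul_heatMul {s t : ℝ} (hs : 0 ≤ s) (ht : 0 ≤ t) (u : V →₂[volume] ℂ) :
    heatMul hs (heatMul ht u) = heatMul (add_nonneg hs ht) u := by
  refine Lp.ext ?_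
  filter_upwards [coeFn_heatMul hs (heatMul ht u), coeFn_heatMul ht u,
    coeFn_heatMul (add_nonneg hs ht) u] with ξ hst ht' hadd
  rw [hst, ht', hadd, heatSymbol_add, Complex.ofReal_mul, mul_assoc]

end HeatSymbol

section HeatKernel

variable {d : ℕ}

theorem fourier_heatKerSpectrum {t : ℝ} (ht : 0 < t) (a x : EuclideanSpace ℝ (Fin d)) :
    𝓕 (heatKerSpectrum t a) x = (heatKer d t (x - a) : ℂ) := by
  have hb : 0 < ((4 * π ^ 2 * t : ℝ) : ℂ).re := by
    rw [Complex.ofReal_re]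
    positivity
  have hspec : heatKerSpectrum t a = fun ξ ↦ Complex.exp (-((4 * π ^ 2 * t : ℝ) : ℂ) * ‖ξ‖ ^ 2
      + 2 * π * Complex.I * ⟪a, ξ⟫) := by
    ext ξ
    rw [Complex.exp_add, heatKerSpectrum, heatSymbol, Real.fourierChar_apply]
    push_cast
    ring_nf
  have hscale : ((π : ℂ) / (4 * π ^ 2 * t : ℝ)) ^ ((d : ℂ) / 2) =
      ((4 * π * t) ^ (-(d : ℝ) / 2) : ℝ) := by
    rw [show (d : ℂ) / 2 = ((d / 2 : ℝ) : ℂ) by push_cast; rfl, ← Complex.ofReal_div,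
      ← Complex.ofReal_cpow (by positivity), neg_div, Real.rpow_neg (by positivity),
      ← Real.inv_rpow (by positivity)]
    congr 3
    field_simp
  rw [hspec, fourier_gaussian_innerProductSpace' hb, finrank_euclideanSpace_fin, hscale, heatKer,
    norm_sub_rev]
  push_cast
  congr 2
  have hπ : (π : ℂ) ≠ 0 := mod_cast Real.pi_ne_zero
  have ht' : (t : ℂ) ≠ 0 := mod_cast ht.ne'
  field_simp

/-- The inverse Fourier transform of a real `L²` function. It represents the initial datum on the
frequency side; inverting here lets `𝓕` itself recover the states of the heat flow. -/
def fourierInvReal {y : EuclideanSpace ℝ (Fin d) → ℝ} (hy : MemLp y 2 volume) :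
    EuclideanSpace ℝ (Fin d) →₂[volume] ℂ :=
  𝓕⁻ (MemLp.toLp (fun x => (y x : ℂ)) hy.ofReal)

theorem norm_fourierInvReal {y : EuclideanSpace ℝ (Fin d) → ℝ} (hy : MemLp y 2 volume) :
    ‖fourierInvReal hy‖ = l2norm d y := by
  have hnorm := Lp.norm_fourier_eq (fourierInvReal hy)
  rw [← hnorm, fourierInvReal, FourierTransform.fourier_fourierInv_eq, Lp.norm_toLp, l2norm]
  congr 1
  exact eLpNorm_congr_norm_ae (.of_forall fun x => Complex.norm_real (y x))

theorem ofReal_heatSol_eq_fourier {y : EuclideanSpace ℝ (Fin d) → ℝ} (hy : MemLp y 2 volume)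
    {t : ℝ} (ht : 0 < t) (x : EuclideanSpace ℝ (Fin d)) :
    (heatSol d y t x : ℂ) = 𝓕 (fun ξ => (heatSymbol t ξ : ℂ) * fourierInvReal hy ξ) x := by
  have hplancherel := integral_inner_fourier_fourier (integrable_heatKerSpectrum ht x)
    (memLp_two_heatKerSpectrum ht x) (fourierInvReal hy)
  have hspace : (heatSol d y t x : ℂ) =
      ∫ z, inner ℂ (𝓕 (heatKerSpectrum t x) z)
        ((𝓕 (fourierInvReal hy) : EuclideanSpace ℝ (Fin d) →₂[volume] ℂ) z) := by
    rw [heatSol, ← integral_const_mul, ← integral_complex_ofReal, fourierInvReal,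
      FourierTransform.fourier_fourierInv_eq]
    refine integral_congr_ae ?_
    filter_upwards [MemLp.coeFn_toLp (f := fun x => (y x : ℂ)) hy.ofReal] with z hz
    rw [hz, fourier_heatKerSpectrum ht, RCLike.inner_apply, Complex.conj_ofReal, heatKer,
      norm_sub_rev]
    push_cast
    ring
  rw [hspace, hplancherel, Real.fourier_eq]
  refine integral_congr_ae (.of_forall fun ξ => ?_)
  simp only [RCLike.inner_apply, heatKerSpectrum, map_mul, Complex.conj_ofReal,
    Circle.smul_def, smul_eq_mul]
  rw [← Circle.coe_inv_eq_conj, ← AddChar.map_neg_eq_inv, real_inner_comm]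
  ring

theorem fourier_heatMul_ae_eq_heatSol {y : EuclideanSpace ℝ (Fin d) → ℝ} (hy : MemLp y 2 volume)
    {t : ℝ} (ht : 0 < t) :
    (𝓕 (heatMul ht.le (fourierInvReal hy)) : EuclideanSpace ℝ (Fin d) →₂[volume] ℂ)
      =ᵐ[volume] fun x => (heatSol d y t x : ℂ) := by
  filter_upwards [fourier_toLp_ae_eq_s18 (integrable_heatSymbol_mul ht (Lp.memLp (fourierInvReal hy)))
    (memLp_heatSymbol_mul ht.le (Lp.memLp _))] with x hx
  rw [heatMul, hx, ofReal_heatSol_eq_fourier hy ht]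

end HeatKernel

section Torus

variable {ι : Type*} {N : ℝ}

/-- Reduction modulo the lattice `N ℤ^ι`, rescaled to land in the unit torus. -/
def toTorus (N : ℝ) (ξ : EuclideanSpace ℝ ι) : UnitAddTorus ι :=
  fun j => ((ξ j / N : ℝ) : UnitAddCircle)

/-- The half-open cube `(-N/2, N/2]^ι`, a fundamental domain of `N ℤ^ι`. The inequalities are
written in the form used by `UnitAddTorus.lintegral_preimage`. -/
def frequencyCube (ι : Type*) (N : ℝ) : Set (EuclideanSpace ℝ ι) :=
  {ξ | ∀ j, ξ j / N ∈ Set.Ioc (-1 / 2 : ℝ) (-1 / 2 + 1)}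

theorem mem_frequencyCube_iff_mem_Ioc (hN : 0 < N) {ξ : EuclideanSpace ℝ ι} :
    ξ ∈ frequencyCube ι N ↔ ∀ j, ξ j ∈ Set.Ioc (-(N / 2)) (N / 2) := by
  refine forall_congr' fun j => ?_
  rw [Set.mem_Ioc, Set.mem_Ioc, lt_div_iff₀ hN, div_le_iff₀ hN]
  constructor <;> rintro ⟨hlt, hle⟩ <;> constructor <;> linarith

/-- The vector `N k` of the lattice `N ℤ^ι`. -/
def frequencyLattice (N : ℝ) (k : ι → ℤ) : EuclideanSpace ℝ ι := WithLp.toLp 2 fun j => N * k j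

theorem frequencyLattice_zero : frequencyLattice N (0 : ι → ℤ) = 0 := by
  ext j
  simp [frequencyLattice]

theorem sub_frequencyLattice_apply_div (hN : N ≠ 0) (ξ : EuclideanSpace ℝ ι) (k : ι → ℤ) (j : ι) :
    (ξ - frequencyLattice N k) j / N = ξ j / N - k j := by
  rw [PiLp.sub_apply, _root_.sub_div, frequencyLattice, mul_div_cancel_left₀ _ hN]

theorem toTorus_sub_frequencyLattice (hN : N ≠ 0) (k : ι → ℤ) (ξ : EuclideanSpace ℝ ι) :
    toTorus N (ξ - frequencyLattice N k) = toTorus N ξ := by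
  funext j
  have hk : ((k j : ℝ) : UnitAddCircle) = 0 := AddCircle.coe_eq_zero_iff 1 |>.2 ⟨k j, by simp⟩
  rw [toTorus, sub_frequencyLattice_apply_div hN, AddCircle.coe_sub, hk, sub_zero, toTorus]

theorem exists_sub_frequencyLattice_mem_frequencyCube (hN : N ≠ 0) (ξ : EuclideanSpace ℝ ι) :
    ∃ k : ι → ℤ, ξ - frequencyLattice N k ∈ frequencyCube ι N := by
  refine ⟨fun j => ⌈ξ j / N - 1 / 2⌉, fun j => ?_⟩
  rw [sub_frequencyLattice_apply_div hN]
  have hle := Int.le_ceil (ξ j / N - 1 / 2)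
  have hlt := Int.ceil_lt_add_one (ξ j / N - 1 / 2)
  constructor <;> linarith

theorem exists_ne_zero_sub_frequencyLattice_mem_frequencyCube (hN : N ≠ 0)
    {ξ : EuclideanSpace ℝ ι} (hξ : ξ ∉ frequencyCube ι N) :
    ∃ k : ι → ℤ, k ≠ 0 ∧ ξ - frequencyLattice N k ∈ frequencyCube ι N := by
  obtain ⟨k, hk⟩ := exists_sub_frequencyLattice_mem_frequencyCube hN ξ
  refine ⟨k, ?_, hk⟩
  rintro rfl
  rw [frequencyLattice_zero, sub_zero] at hk
  exact hξ hk

theorem mul_abs_le_of_sub_frequencyLattice_mem_frequencyCube (hN : 0 < N) {k : ι → ℤ}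
    {ξ : EuclideanSpace ℝ ι} (h : ξ - frequencyLattice N k ∈ frequencyCube ι N) (j : ι) :
    N * |(k j : ℝ)| ≤ 2 * |ξ j| := by
  obtain ⟨hlt, hle⟩ := h j
  rw [sub_frequencyLattice_apply_div hN.ne'] at hlt hle
  rcases eq_or_ne (k j) 0 with hk | hk
  · simp [hk]
  have hone : (1 : ℝ) ≤ |(k j : ℝ)| := mod_cast Int.one_le_abs hk
  have hdiv : |(k j : ℝ)| ≤ 2 * |ξ j / N| := by
    have hdist : |(k j : ℝ) - ξ j / N| ≤ 1 / 2 := abs_le.2 ⟨by linarith, by linarith⟩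
    linarith [abs_sub_abs_le_abs_sub (k j : ℝ) (ξ j / N)]
  rw [abs_div, abs_of_pos hN, ← mul_div_assoc, le_div_iff₀ hN] at hdiv
  linarith

theorem measurable_toTorus (N : ℝ) : Measurable (toTorus N : EuclideanSpace ℝ ι → _) :=
  measurable_pi_lambda _ fun _ => AddCircle.measurable_mk'.comp (by fun_prop)

theorem measurableSet_frequencyCube [Countable ι] (N : ℝ) : MeasurableSet (frequencyCube ι N) := by
  rw [frequencyCube, Set.ofPred_forall]
  exact MeasurableSet.iInter fun j => measurableSet_Ioc.preimage (by fun_prop)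

variable [Fintype ι]

theorem map_div_volume (hN : 0 < N) :
    Measure.map (fun (ξ : EuclideanSpace ℝ ι) j => ξ j / N) volume =
      ENNReal.ofReal (N ^ Fintype.card ι) • (volume : Measure (ι → ℝ)) := by
  have hcomp : (fun (ξ : EuclideanSpace ℝ ι) j => ξ j / N) =
      (fun x : ι → ℝ => N⁻¹ • x) ∘ WithLp.ofLp := by
    funext ξ j
    exact div_eq_inv_mul _ _
  rw [hcomp, ← Measure.map_map (by fun_prop) (by fun_prop),
    (PiLp.volume_preserving_ofLp ι).map_eq, Measure.map_addHaar_smul _ (inv_ne_zero hN.ne'),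
    Module.finrank_fintype_fun_eq_card, inv_pow, inv_inv, abs_of_pos (by positivity)]

theorem map_toTorus (hN : 0 < N) :
    Measure.map (toTorus N) (volume.restrict (frequencyCube ι N)) =
      ENNReal.ofReal (N ^ Fintype.card ι) • (volume : Measure (UnitAddTorus ι)) := by
  set S : Set (ι → ℝ) := {x | ∀ j, x j ∈ Set.Ioc (-1 / 2 : ℝ) (-1 / 2 + 1)}
  have hS : MeasurableSet S := MeasurableSet.univ_pi' fun _ => measurableSet_Ioc
  have hproj : Measurable fun (x : ι → ℝ) j => (x j : UnitAddCircle) :=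
    measurable_pi_lambda _ fun j => AddCircle.measurable_mk'.comp (measurable_pi_apply j)
  refine Measure.ext_of_lintegral _ fun f hf => ?_
  rw [lintegral_map hf (measurable_toTorus N), lintegral_smul_measure,
    UnitAddTorus.lintegral_preimage f fun _ => -1 / 2, ← lintegral_smul_measure,
    ← Measure.restrict_smul, ← map_div_volume hN]
  exact (setLIntegral_map hS (hf.comp hproj) (by fun_prop)).symm

theorem setLIntegral_comp_toTorus (hN : 0 < N) {f : UnitAddTorus ι → ℝ≥0∞} (hf : Measurable f) :
    ∫⁻ ξ in frequencyCube ι N, f (toTorus N ξ) =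
      ENNReal.ofReal (N ^ Fintype.card ι) * ∫⁻ θ, f θ := by
  rw [← lintegral_map hf (measurable_toTorus N), map_toTorus hN, lintegral_smul_measure,
    smul_eq_mul]

theorem volume_frequencyCube (hN : 0 < N) :
    volume (frequencyCube ι N) = ENNReal.ofReal (N ^ Fintype.card ι) := by
  have htorus : volume (Set.univ : Set (UnitAddTorus ι)) = 1 := by simp [volume]
  simpa [htorus] using setLIntegral_comp_toTorus (ι := ι) hN (measurable_const (a := 1))

end Torus

section LatticeSums

variable {ι : Type*} [Fintype ι]

theorem summable_pi_prod {κ : ι → Type*} {f : ∀ i, κ i → ℝ} (hf₀ : ∀ i k, 0 ≤ f i k)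
    (hf : ∀ i, Summable (f i)) : Summable fun k : ∀ i, κ i => ∏ i, f i (k i) := by
  classical
  refine summable_of_sum_le (fun k => Finset.prod_nonneg fun i _ => hf₀ i (k i))
    (c := ∏ i, ∑' k, f i k) fun s => ?_
  calc ∑ k ∈ s, ∏ i, f i (k i)
      ≤ ∑ k ∈ Fintype.piFinset fun i => s.image (· i), ∏ i, f i (k i) :=
        Finset.sum_le_sum_of_subset_of_nonneg
          (fun k hk => Fintype.mem_piFinset.2 fun i => Finset.mem_image_of_mem _ hk)
          fun k _ _ => Finset.prod_nonneg fun i _ => hf₀ i (k i)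
    _ = ∏ i, ∑ k ∈ s.image (· i), f i k := (Finset.prod_univ_sum _ _).symm
    _ ≤ ∏ i, ∑' k, f i k :=
        Finset.prod_le_prod (fun i _ => Finset.sum_nonneg fun k _ => hf₀ i k)
          fun i _ => (hf i).sum_le_tsum _ fun k _ => hf₀ i k

theorem summable_exp_neg_mul_int_sq {b : ℝ} (hb : 0 < b) :
    Summable fun n : ℤ => Real.exp (-b * (n : ℝ) ^ 2) := by
  refine (summable_pow_mul_jacobiTheta₂_term_bound 0 (T := b / π) (by positivity) 0).congr
    fun n => ?_
  rw [pow_zero, one_mul]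
  congr 1
  field_simp
  ring

theorem summable_exp_neg_mul_sum_int_sq {b : ℝ} (hb : 0 < b) :
    Summable fun k : ι → ℤ => Real.exp (-b * ∑ j, (k j : ℝ) ^ 2) := by
  simp only [Finset.mul_sum, Real.exp_sum]
  exact summable_pi_prod (f := fun _ (n : ℤ) => Real.exp (-b * (n : ℝ) ^ 2))
    (fun _ _ => (Real.exp_pos _).le) fun _ => summable_exp_neg_mul_int_sq hb

theorem one_le_sum_int_sq {k : ι → ℤ} (hk : k ≠ 0) : (1 : ℝ) ≤ ∑ j, (k j : ℝ) ^ 2 := by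
  obtain ⟨j, hj⟩ := Function.ne_iff.1 hk
  have hsq : (1 : ℝ) ≤ (k j : ℝ) ^ 2 := mod_cast (one_le_sq_iff_one_le_abs _).2 (Int.one_le_abs hj)
  exact hsq.trans (Finset.single_le_sum (f := fun j => (k j : ℝ) ^ 2) (fun _ _ => sq_nonneg _)
    (Finset.mem_univ j))

/-- The theta value `∑_{k ∈ ℤ^ι} e^{-|k|²}`. -/
def latticeGaussianSum (ι : Type*) [Fintype ι] : ℝ :=
  ∑' k : ι → ℤ, Real.exp (-∑ j, (k j : ℝ) ^ 2)

theorem summable_exp_neg_sum_int_sq :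
    Summable fun k : ι → ℤ => Real.exp (-∑ j, (k j : ℝ) ^ 2) := by
  simpa using summable_exp_neg_mul_sum_int_sq (ι := ι) one_pos

theorem one_le_latticeGaussianSum (ι : Type*) [Fintype ι] : 1 ≤ latticeGaussianSum ι := by
  simpa [latticeGaussianSum] using
    summable_exp_neg_sum_int_sq.le_tsum (0 : ι → ℤ) fun k _ => (Real.exp_pos _).le

/-- The sum `∑_{k ≠ 0} e^{-b|k|²}`, which controls the translates of the fundamental cube by
nonzero lattice vectors. -/
def aliasingSum (ι : Type*) [Fintype ι] (b : ℝ) : ℝ≥0∞ :=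
  ∑' k : {k : ι → ℤ // k ≠ 0}, ENNReal.ofReal (Real.exp (-b * ∑ j, (k.1 j : ℝ) ^ 2))

theorem aliasingSum_ne_top {b : ℝ} (hb : 0 < b) : aliasingSum ι b ≠ ∞ := by
  have hsum := (summable_exp_neg_mul_sum_int_sq (ι := ι) hb).subtype {k | k ≠ 0}
  exact hsum.tsum_ofReal_ne_top

theorem aliasingSum_le {b : ℝ} (hb : 2 ≤ b) :
    aliasingSum ι b ≤ ENNReal.ofReal (Real.exp (-b / 2) * latticeGaussianSum ι) := by
  have hterm (k : {k : ι → ℤ // k ≠ 0}) : Real.exp (-b * ∑ j, (k.1 j : ℝ) ^ 2) ≤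
      Real.exp (-b / 2) * Real.exp (-∑ j, (k.1 j : ℝ) ^ 2) := by
    rw [← Real.exp_add, Real.exp_le_exp]
    nlinarith [one_le_sum_int_sq k.2]
  calc aliasingSum ι b
      ≤ ∑' k : {k : ι → ℤ // k ≠ 0},
          ENNReal.ofReal (Real.exp (-b / 2) * Real.exp (-∑ j, (k.1 j : ℝ) ^ 2)) :=
        ENNReal.tsum_le_tsum fun k => ENNReal.ofReal_le_ofReal (hterm k)
    _ ≤ ∑' k : ι → ℤ, ENNReal.ofReal (Real.exp (-b / 2) * Real.exp (-∑ j, (k j : ℝ) ^ 2)) :=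
        ENNReal.tsum_comp_le_tsum_of_injective Subtype.val_injective
          fun k : ι → ℤ => ENNReal.ofReal (Real.exp (-b / 2) * Real.exp (-∑ j, (k j : ℝ) ^ 2))
    _ = ENNReal.ofReal (Real.exp (-b / 2) * latticeGaussianSum ι) := by
        rw [latticeGaussianSum, ← _root_.tsum_mul_left, ENNReal.ofReal_tsum_of_nonneg
          (fun k => by positivity) (summable_exp_neg_sum_int_sq.mul_left _)]

end LatticeSums

section Aliasing

variable {ι : Type*} [Fintype ι] {N : ℝ}

theorem heatSymbol_le_exp_of_sub_frequencyLattice_mem_frequencyCube (hN : 0 < N) {s : ℝ}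
    (hs : 0 ≤ s) {k : ι → ℤ} {ξ : EuclideanSpace ℝ ι}
    (h : ξ - frequencyLattice N k ∈ frequencyCube ι N) :
    heatSymbol s ξ ≤ Real.exp (-(π ^ 2 * s * N ^ 2) * ∑ j, (k j : ℝ) ^ 2) := by
  have hcoord (j : ι) : N ^ 2 * (k j : ℝ) ^ 2 ≤ 4 * ξ j ^ 2 := by
    have hle := mul_abs_le_of_sub_frequencyLattice_mem_frequencyCube hN h j
    calc N ^ 2 * (k j : ℝ) ^ 2 = (N * |(k j : ℝ)|) ^ 2 := by rw [mul_pow, sq_abs]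
      _ ≤ (2 * |ξ j|) ^ 2 := by gcongr
      _ = 4 * ξ j ^ 2 := by rw [mul_pow, sq_abs]; norm_num
  have hnorm : N ^ 2 * ∑ j, (k j : ℝ) ^ 2 ≤ 4 * ‖ξ‖ ^ 2 := by
    rw [EuclideanSpace.real_norm_sq_eq, Finset.mul_sum, Finset.mul_sum]
    exact Finset.sum_le_sum fun j _ => hcoord j
  rw [heatSymbol, Real.exp_le_exp]
  linarith [mul_le_mul_of_nonneg_left hnorm (mul_nonneg (sq_nonneg π) hs)]

theorem ofReal_heatSymbol_le_aliasingSum (hN : 0 < N) {s : ℝ} (hs : 0 ≤ s)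
    {ξ : EuclideanSpace ℝ ι} (hξ : ξ ∉ frequencyCube ι N) :
    ENNReal.ofReal (heatSymbol s ξ) ≤ aliasingSum ι (π ^ 2 * s * N ^ 2) := by
  obtain ⟨k, hk, hkξ⟩ := exists_ne_zero_sub_frequencyLattice_mem_frequencyCube hN.ne' hξ
  have hexp := heatSymbol_le_exp_of_sub_frequencyLattice_mem_frequencyCube hN hs hkξ
  exact (ENNReal.ofReal_le_ofReal hexp).trans
    (ENNReal.le_tsum (⟨k, hk⟩ : {k : ι → ℤ // k ≠ 0}))

theorem setLIntegral_translate_comp_toTorus (hN : 0 < N) {f : UnitAddTorus ι → ℝ≥0∞}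
    (hf : Measurable f) (k : ι → ℤ) :
    ∫⁻ ξ in (fun ξ => ξ - frequencyLattice N k) ⁻¹' frequencyCube ι N, f (toTorus N ξ) =
      ENNReal.ofReal (N ^ Fintype.card ι) * ∫⁻ θ, f θ := by
  have htranslate := (measurePreserving_sub_right volume
    (frequencyLattice N k)).setLIntegral_comp_preimage_emb
      (MeasurableEquiv.subRight (frequencyLattice N k)).measurableEmbedding
      (fun ξ => f (toTorus N ξ)) (frequencyCube ι N)
  simpa only [toTorus_sub_frequencyLattice hN.ne', setLIntegral_comp_toTorus hN hf] using htranslate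

theorem setLIntegral_compl_frequencyCube_le (hN : 0 < N) {s : ℝ} (hs : 0 ≤ s)
    {f : UnitAddTorus ι → ℝ≥0∞} (hf : Measurable f) :
    ∫⁻ ξ in (frequencyCube ι N)ᶜ, ENNReal.ofReal (heatSymbol s ξ) * f (toTorus N ξ) ≤
      aliasingSum ι (π ^ 2 * s * N ^ 2) *
        (ENNReal.ofReal (N ^ Fintype.card ι) * ∫⁻ θ, f θ) := by
  set Q : (ι → ℤ) → Set (EuclideanSpace ℝ ι) := fun k =>
    (fun ξ => ξ - frequencyLattice N k) ⁻¹' frequencyCube ι N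
  have hcover : (frequencyCube ι N)ᶜ ⊆ ⋃ k : {k : ι → ℤ // k ≠ 0}, Q k := fun ξ hξ => by
    obtain ⟨k, hk, hkξ⟩ := exists_ne_zero_sub_frequencyLattice_mem_frequencyCube hN.ne' hξ
    exact Set.mem_iUnion.2 ⟨⟨k, hk⟩, hkξ⟩
  have hcell (k : ι → ℤ) :
      ∫⁻ ξ in Q k, ENNReal.ofReal (heatSymbol s ξ) * f (toTorus N ξ) ≤
        ENNReal.ofReal (Real.exp (-(π ^ 2 * s * N ^ 2) * ∑ j, (k j : ℝ) ^ 2)) *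
          (ENNReal.ofReal (N ^ Fintype.card ι) * ∫⁻ θ, f θ) := by
    rw [← setLIntegral_translate_comp_toTorus hN hf k,
      ← lintegral_const_mul' _ _ ENNReal.ofReal_ne_top]
    refine setLIntegral_mono' ((measurableSet_frequencyCube N).preimage (by fun_prop))
      fun ξ hξ => ?_
    gcongr
    exact heatSymbol_le_exp_of_sub_frequencyLattice_mem_frequencyCube hN hs hξ
  calc ∫⁻ ξ in (frequencyCube ι N)ᶜ, ENNReal.ofReal (heatSymbol s ξ) * f (toTorus N ξ)
      ≤ ∑' k : {k : ι → ℤ // k ≠ 0},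
          ∫⁻ ξ in Q k, ENNReal.ofReal (heatSymbol s ξ) * f (toTorus N ξ) :=
        (lintegral_mono_set hcover).trans (lintegral_iUnion_le _ _)
    _ ≤ aliasingSum ι (π ^ 2 * s * N ^ 2) *
          (ENNReal.ofReal (N ^ Fintype.card ι) * ∫⁻ θ, f θ) := by
        rw [aliasingSum, ← ENNReal.tsum_mul_right]
        exact ENNReal.tsum_le_tsum fun k => hcell k

end Aliasing

section CubeLift

variable {ι : Type*} {N : ℝ}

/-- The point of the fundamental cube `(-N/2, N/2]^ι` lying above a point of the torus. -/
def cubeLift (N : ℝ) (θ : UnitAddTorus ι) : EuclideanSpace ℝ ι :=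
  WithLp.toLp 2 fun j => N * AddCircle.equivIoc (1 : ℝ) (-1 / 2) (θ j)

theorem cubeLift_toTorus (hN : N ≠ 0) {ξ : EuclideanSpace ℝ ι} (hξ : ξ ∈ frequencyCube ι N) :
    cubeLift N (toTorus N ξ) = ξ := by
  ext j
  have hcoord := AddCircle.equivIoc_coe_of_mem (p := (1 : ℝ)) (hξ j)
  simp only [cubeLift, toTorus, hcoord]
  exact mul_div_cancel₀ _ hN

theorem measurable_cubeLift (N : ℝ) : Measurable (cubeLift N : UnitAddTorus ι → _) :=
  (MeasurableEquiv.toLp 2 (ι → ℝ)).measurable.comp <| measurable_pi_lambda _ fun j =>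
    (measurable_subtype_coe.comp ((AddCircle.measurableEquivIoc (1 : ℝ) (-1 / 2)).measurable.comp
      (measurable_pi_apply j))).const_mul N

variable [Fintype ι]

theorem lintegral_comp_cubeLift (hN : 0 < N) {f : EuclideanSpace ℝ ι → ℝ≥0∞} (hf : Measurable f) :
    ENNReal.ofReal (N ^ Fintype.card ι) * ∫⁻ θ, f (cubeLift N θ) =
      ∫⁻ ξ in frequencyCube ι N, f ξ := by
  refine (setLIntegral_comp_toTorus hN (hf.comp (measurable_cubeLift N))).symm.trans ?_
  refine setLIntegral_congr_fun (measurableSet_frequencyCube N) fun ξ hξ => ?_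
  rw [Function.comp_apply, cubeLift_toTorus hN.ne' hξ]

end CubeLift

section NormSquared

variable {α E F : Type*} [NormedAddCommGroup E] [NormedAddCommGroup F]

theorem eLpNorm_two_sq [MeasurableSpace α] (f : α → E) (μ : Measure α) :
    eLpNorm f 2 μ ^ 2 = ∫⁻ x, ‖f x‖ₑ ^ 2 ∂μ := by
  simpa using eLpNorm_nnreal_pow_eq_lintegral (μ := μ) (f := f) (p := 2) two_ne_zero

theorem memLp_two_of_lintegral_ne_top [MeasurableSpace α] {f : α → E} {μ : Measure α}
    (hf : AEStronglyMeasurable f μ) (h : ∫⁻ x, ‖f x‖ₑ ^ 2 ∂μ ≠ ∞) : MemLp f 2 μ := by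
  rw [← eLpNorm_two_sq, ← lt_top_iff_ne_top, ENNReal.pow_lt_top_iff] at h
  exact ⟨hf, h.resolve_right two_ne_zero⟩

theorem enorm_sq_eq_lintegral [MeasurableSpace α] {μ : Measure α} (f : α →₂[μ] E) :
    ‖f‖ₑ ^ 2 = ∫⁻ x, ‖f x‖ₑ ^ 2 ∂μ := by
  rw [Lp.enorm_def, eLpNorm_two_sq]

theorem norm_le_sqrt_mul_norm {c : ℝ≥0∞} (hc : c ≠ ∞) {x : E} {y : F}
    (h : ‖x‖ₑ ^ 2 ≤ c * ‖y‖ₑ ^ 2) : ‖x‖ ≤ √c.toReal * ‖y‖ := by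
  have hsq : ‖x‖ ^ 2 ≤ c.toReal * ‖y‖ ^ 2 := by
    simpa using ENNReal.toReal_mono (ENNReal.mul_ne_top hc (by simp)) h
  refine le_of_sq_le_sq ?_ (by positivity)
  rwa [mul_pow, Real.sq_sqrt ENNReal.toReal_nonneg]

theorem enorm_sub_sq_le {G : Type*} [SeminormedAddCommGroup G] (x y : G) :
    ‖x - y‖ₑ ^ 2 ≤ 2 * ‖x‖ₑ ^ 2 + 2 * ‖y‖ₑ ^ 2 := by
  calc ‖x - y‖ₑ ^ 2 ≤ (‖x‖ₑ + ‖y‖ₑ) ^ 2 := by gcongr; exact enorm_sub_le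
    _ ≤ 2 * ‖x‖ₑ ^ 2 + 2 * ‖y‖ₑ ^ 2 := by
      rw [← mul_add]
      simp only [enorm_eq_nnnorm]
      exact_mod_cast add_sq_le (a := ‖x‖₊) (b := ‖y‖₊)

end NormSquared

section TorusRestriction

variable {ι : Type*} [Fintype ι] {N : ℝ}

theorem lintegral_comp_cubeLift_le (hN : 0 < N) (w : EuclideanSpace ℝ ι →₂[volume] ℂ) :
    ENNReal.ofReal (N ^ Fintype.card ι) * ∫⁻ θ, ‖w (cubeLift N θ)‖ₑ ^ 2 ≤ ‖w‖ₑ ^ 2 := by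
  have hw : Measurable fun ξ => ‖w ξ‖ₑ ^ 2 :=
    (Lp.stronglyMeasurable w).measurable.enorm.pow_const 2
  rw [enorm_sq_eq_lintegral, lintegral_comp_cubeLift hN hw]
  exact setLIntegral_le_lintegral _ _

theorem memLp_two_comp_cubeLift (hN : 0 < N) (w : EuclideanSpace ℝ ι →₂[volume] ℂ) :
    MemLp (fun θ => w (cubeLift N θ)) 2 volume := by
  refine memLp_two_of_lintegral_ne_top
    ((Lp.stronglyMeasurable w).measurable.comp (measurable_cubeLift N)).aestronglyMeasurable ?_
  have hfin : ‖w‖ₑ ^ 2 < ∞ := by simp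
  exact (ENNReal.lt_top_of_mul_ne_top_right ((lintegral_comp_cubeLift_le hN w).trans_lt hfin).ne
    (by simpa using pow_pos hN _)).ne

/-- The restriction of `w` to the fundamental cube, viewed as a function on the torus. Its
pullback along `toTorus` is the periodization of `w` restricted to the cube. -/
def torusRestriction (hN : 0 < N) (w : EuclideanSpace ℝ ι →₂[volume] ℂ) :
    UnitAddTorus ι →₂[volume] ℂ :=
  (memLp_two_comp_cubeLift hN w).toLp

theorem coeFn_torusRestriction (hN : 0 < N) (w : EuclideanSpace ℝ ι →₂[volume] ℂ) :
    torusRestriction hN w =ᵐ[volume] fun θ => w (cubeLift N θ) :=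
  MemLp.coeFn_toLp _

theorem enorm_torusRestriction_sq_le (hN : 0 < N) (w : EuclideanSpace ℝ ι →₂[volume] ℂ) :
    ENNReal.ofReal (N ^ Fintype.card ι) * ‖torusRestriction hN w‖ₑ ^ 2 ≤ ‖w‖ₑ ^ 2 := by
  rw [Lp.enorm_def (torusRestriction hN w), eLpNorm_congr_ae (coeFn_torusRestriction hN w),
    eLpNorm_two_sq]
  exact lintegral_comp_cubeLift_le hN w

end TorusRestriction

section HeatPeriodize

variable {ι : Type*} [Fintype ι] {N t : ℝ}

theorem quasiMeasurePreserving_toTorus (hN : 0 < N) :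
    Measure.QuasiMeasurePreserving (toTorus N : EuclideanSpace ℝ ι → _) := by
  refine ⟨measurable_toTorus N, Measure.AbsolutelyContinuous.mk fun s hs hs₀ => ?_⟩
  rw [Measure.map_apply (measurable_toTorus N) hs, ← lintegral_indicator_one
    (measurable_toTorus N hs)]
  have hcover : (⋃ k : ι → ℤ, (fun ξ => ξ - frequencyLattice N k) ⁻¹' frequencyCube ι N) =
      Set.univ :=
    Set.iUnion_eq_univ_iff.2 (exists_sub_frequencyLattice_mem_frequencyCube hN.ne')
  rw [← setLIntegral_univ, ← hcover, ← nonpos_iff_eq_zero]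
  refine (lintegral_iUnion_le _ _).trans_eq (ENNReal.tsum_eq_zero.2 fun k => ?_)
  have hcell := setLIntegral_translate_comp_toTorus hN (measurable_one.indicator hs) k
  rwa [lintegral_indicator_one hs, hs₀, mul_zero] at hcell

theorem lintegral_heatSymbol_mul_comp_toTorus_le (hN : 0 < N) (ht : 0 ≤ t)
    {h : UnitAddTorus ι → ℂ} (hh : Measurable h) :
    ∫⁻ ξ, ‖(heatSymbol t ξ : ℂ) * h (toTorus N ξ)‖ₑ ^ 2 ≤
      (1 + aliasingSum ι (π ^ 2 * (2 * t) * N ^ 2)) * ENNReal.ofReal (N ^ Fintype.card ι) *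
        ∫⁻ θ, ‖h θ‖ₑ ^ 2 := by
  have hsq : Measurable fun θ => ‖h θ‖ₑ ^ 2 := by fun_prop
  have h2t : 0 ≤ 2 * t := by positivity
  simp only [enorm_heatSymbol_mul_sq]
  rw [← lintegral_add_compl _ (measurableSet_frequencyCube N), mul_assoc, add_mul, one_mul]
  refine add_le_add ?_ (setLIntegral_compl_frequencyCube_le hN h2t hsq)
  rw [← setLIntegral_comp_toTorus hN hsq]
  exact lintegral_mono fun ξ =>
    mul_le_of_le_one_left zero_le (ENNReal.ofReal_le_one.2 (heatSymbol_le_one h2t ξ))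

theorem periodizationConst_ne_top (hN : 0 < N) (ht : 0 < t) :
    (1 + aliasingSum ι (π ^ 2 * (2 * t) * N ^ 2)) * ENNReal.ofReal (N ^ Fintype.card ι) ≠ ∞ :=
  ENNReal.mul_ne_top (ENNReal.add_ne_top.2 ⟨ENNReal.one_ne_top, aliasingSum_ne_top (by positivity)⟩)
    ENNReal.ofReal_ne_top

theorem memLp_two_heatSymbol_mul_comp_toTorus (hN : 0 < N) (ht : 0 < t)
    (h : UnitAddTorus ι →₂[volume] ℂ) :
    MemLp (fun ξ => (heatSymbol t ξ : ℂ) * h (toTorus N ξ)) 2 volume := by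
  have hh := (Lp.stronglyMeasurable h).measurable
  have hsymb := (Complex.continuous_ofReal.comp
    (continuous_heatSymbol (V := EuclideanSpace ℝ ι) t)).measurable
  refine memLp_two_of_lintegral_ne_top
    (hsymb.mul (hh.comp (measurable_toTorus N))).aestronglyMeasurable
    (ne_top_of_le_ne_top ?_ (lintegral_heatSymbol_mul_comp_toTorus_le hN ht.le hh))
  rw [← enorm_sq_eq_lintegral]
  exact ENNReal.mul_ne_top (periodizationConst_ne_top hN ht) (by simp)

/-- The operator sending a function on the torus to its periodic extension to frequency space,
damped by the heat symbol. -/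
def heatPeriodize (hN : 0 < N) (ht : 0 < t) :
    (UnitAddTorus ι →₂[volume] ℂ) →L[ℂ] (EuclideanSpace ℝ ι →₂[volume] ℂ) :=
  LinearMap.mkContinuous
    { toFun := fun h => (memLp_two_heatSymbol_mul_comp_toTorus hN ht h).toLp
      map_add' := fun f g => by
        rw [← MemLp.toLp_add, MemLp.toLp_eq_toLp_iff]
        filter_upwards [(quasiMeasurePreserving_toTorus hN).ae (Lp.coeFn_add f g)] with ξ hξ
        rw [hξ, Pi.add_apply, Pi.add_apply, mul_add]
      map_smul' := fun c f => by
        rw [RingHom.id_apply, ← MemLp.toLp_const_smul, MemLp.toLp_eq_toLp_iff]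
        filter_upwards [(quasiMeasurePreserving_toTorus hN).ae (Lp.coeFn_smul c f)] with ξ hξ
        rw [hξ, Pi.smul_apply, Pi.smul_apply, mul_smul_comm] }
    _ fun h => norm_le_sqrt_mul_norm (periodizationConst_ne_top hN ht) <| by
      rw [LinearMap.coe_mk, AddHom.coe_mk, Lp.enorm_toLp, eLpNorm_two_sq, enorm_sq_eq_lintegral]
      exact lintegral_heatSymbol_mul_comp_toTorus_le hN ht.le
        (Lp.stronglyMeasurable h).measurable

theorem coeFn_heatPeriodize (hN : 0 < N) (ht : 0 < t) (h : UnitAddTorus ι →₂[volume] ℂ) :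
    heatPeriodize hN ht h =ᵐ[volume] fun ξ => (heatSymbol t ξ : ℂ) * h (toTorus N ξ) :=
  (memLp_two_heatSymbol_mul_comp_toTorus hN ht h).coeFn_toLp

theorem coeFn_heatPeriodize_of_ae_eq (hN : 0 < N) (ht : 0 < t) {h : UnitAddTorus ι →₂[volume] ℂ}
    {g : UnitAddTorus ι → ℂ} (hg : h =ᵐ[volume] g) :
    heatPeriodize hN ht h =ᵐ[volume] fun ξ => (heatSymbol t ξ : ℂ) * g (toTorus N ξ) := by
  filter_upwards [coeFn_heatPeriodize hN ht h, (quasiMeasurePreserving_toTorus hN).ae hg]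
    with ξ hξ hgξ
  rw [hξ, hgξ]

end HeatPeriodize

section BandLimited

variable {d : ℕ} {N : ℝ}

theorem fourierChar_inner_eq_prod (a ξ : EuclideanSpace ℝ (Fin d)) :
    (𝐞 ⟪a, ξ⟫ : ℂ) = ∏ j, (𝐞 (a j * ξ j) : ℂ) := by
  simp only [PiLp.inner_apply, Real.inner_apply, Real.fourierChar_apply, ← Complex.exp_sum]
  push_cast
  rw [Finset.mul_sum, Finset.sum_mul]

theorem mFourier_toTorus (N : ℝ) (n : Fin d → ℤ) (ξ : EuclideanSpace ℝ (Fin d)) :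
    UnitAddTorus.mFourier n (toTorus N ξ) = 𝐞 ⟪latticePt d N n, ξ⟫ := by
  rw [fourierChar_inner_eq_prod, UnitAddTorus.mFourier, ContinuousMap.coe_mk]
  refine Finset.prod_congr rfl fun j _ => ?_
  rw [toTorus, fourier_coe_apply, Real.fourierChar_apply, latticePt]
  push_cast
  ring_nf

theorem setIntegral_inv_mul_fourierChar (hN : 0 < N) (a : ℝ) :
    ∫ s in Set.Ioc (-(N / 2)) (N / 2), (N : ℂ)⁻¹ * 𝐞 (a * s) = (sinc' (π * (N * a)) : ℂ) := by
  have hN₀ : (N : ℂ) ≠ 0 := mod_cast hN.ne'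
  rw [← intervalIntegral.integral_of_le (by linarith), intervalIntegral.integral_const_mul]
  rcases eq_or_ne a 0 with rfl | ha
  · simp [sinc', hN₀]
  have ha₀ : (a : ℂ) ≠ 0 := mod_cast ha
  have hπ₀ : (π : ℂ) ≠ 0 := mod_cast Real.pi_ne_zero
  have hscale := intervalIntegral.integral_comp_mul_left (a := -(N / 2)) (b := N / 2)
    (fun s : ℝ => Complex.exp (s * Complex.I)) (c := 2 * π * a) (by positivity)
  have hchar : ∀ s : ℝ, (𝐞 (a * s) : ℂ) = Complex.exp ((2 * π * a * s : ℝ) * Complex.I) :=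
    fun s => by rw [Real.fourierChar_apply, ← mul_assoc]
  simp only [hchar]
  rw [hscale, show 2 * π * a * -(N / 2) = -(π * (N * a)) by ring,
    show 2 * π * a * (N / 2) = π * (N * a) by ring, integral_exp_mul_I_eq_sinc,
    show Real.sinc (π * (N * a)) = sinc' (π * (N * a)) from rfl, Complex.real_smul]
  push_cast
  field_simp

/-- The frequency profile of `fN d N n`: the character of frequency `n / N`, normalized and cut off
to the fundamental cube. -/
def bandSpectrum (N : ℝ) (n : Fin d → ℤ) : EuclideanSpace ℝ (Fin d) → ℂ :=
  (frequencyCube (Fin d) N).indicator fun ξ => (N ^ d : ℂ)⁻¹ * 𝐞 ⟪latticePt d N n, ξ⟫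

theorem memLp_bandSpectrum (hN : 0 < N) (n : Fin d → ℤ) (p : ℝ≥0∞) :
    MemLp (bandSpectrum N n) p volume := by
  have hfinite : IsFiniteMeasure (volume.restrict (frequencyCube (Fin d) N)) :=
    ⟨by simp [volume_frequencyCube hN]⟩
  rw [bandSpectrum, memLp_indicator_iff_restrict (measurableSet_frequencyCube N)]
  refine MemLp.of_bound (C := ‖(N ^ d : ℂ)⁻¹‖) (by fun_prop) (.of_forall fun ξ => ?_)
  rw [norm_mul, Circle.norm_coe, mul_one]

theorem fourierChar_smul_bandSpectrum (hN : 0 < N) (n : Fin d → ℤ)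
    (x ξ : EuclideanSpace ℝ (Fin d)) :
    𝐞 (-⟪ξ, x⟫) • bandSpectrum N n ξ =
      ∏ j, (Set.Ioc (-(N / 2)) (N / 2)).indicator
        (fun s : ℝ => (N : ℂ)⁻¹ * 𝐞 ((n j / N - x j) * s)) (ξ j) := by
  by_cases hξ : ξ ∈ frequencyCube (Fin d) N
  · have hcoord := (mem_frequencyCube_iff_mem_Ioc hN).1 hξ
    have hchar : 𝐞 (-⟪ξ, x⟫) * 𝐞 ⟪latticePt d N n, ξ⟫ = 𝐞 ⟪latticePt d N n - x, ξ⟫ := by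
      rw [← AddChar.map_add_eq_mul, inner_sub_left, real_inner_comm, neg_add_eq_sub]
    simp only [Set.indicator_of_mem (hcoord _)]
    rw [bandSpectrum, Set.indicator_of_mem hξ, Circle.smul_def, smul_eq_mul, mul_left_comm,
      ← Circle.coe_mul, hchar, fourierChar_inner_eq_prod, Finset.prod_mul_distrib,
      Finset.prod_const, Finset.card_univ, Fintype.card_fin, inv_pow]
    rfl
  · obtain ⟨j, hj⟩ := not_forall.1 (mt (mem_frequencyCube_iff_mem_Ioc hN).2 hξ)
    rw [bandSpectrum, Set.indicator_of_notMem hξ, smul_zero]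
    exact (Finset.prod_eq_zero (Finset.mem_univ j) (Set.indicator_of_notMem hj _)).symm

theorem fourier_bandSpectrum (hN : 0 < N) (n : Fin d → ℤ) (x : EuclideanSpace ℝ (Fin d)) :
    𝓕 (bandSpectrum N n) x = (fN d N n x : ℂ) := by
  set g : Fin d → ℝ → ℂ := fun j => (Set.Ioc (-(N / 2)) (N / 2)).indicator
    fun s : ℝ => (N : ℂ)⁻¹ * 𝐞 ((n j / N - x j) * s)
  have hcoord (j : Fin d) : ∫ s, g j s = (sinc' (π * (N * x j - n j)) : ℂ) := by
    have hodd : π * (N * (n j / N - x j)) = -(π * (N * x j - n j)) := by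
      field_simp
      ring
    rw [integral_indicator measurableSet_Ioc, setIntegral_inv_mul_fourierChar hN, hodd]
    exact congrArg _ (Real.sinc_neg _)
  calc 𝓕 (bandSpectrum N n) x
      = ∫ ξ : EuclideanSpace ℝ (Fin d), ∏ j, g j (ξ j) := by
        rw [Real.fourier_eq]
        exact integral_congr_ae (.of_forall (fourierChar_smul_bandSpectrum hN n x))
    _ = ∫ ξ : Fin d → ℝ, ∏ j, g j (ξ j) :=
        (PiLp.volume_preserving_ofLp (Fin d)).integral_comp
          (MeasurableEquiv.toLp 2 (Fin d → ℝ)).symm.measurableEmbedding fun ξ => ∏ j, g j (ξ j)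
    _ = ∏ j, ∫ s, g j s := integral_fintype_prod_volume_eq_prod g
    _ = (fN d N n x : ℂ) := by
        simp only [hcoord, fN, Complex.ofReal_prod]

theorem mFourierCoeff_torusRestriction (hN : 0 < N)
    (w : EuclideanSpace ℝ (Fin d) →₂[volume] ℂ) (n : Fin d → ℤ) :
    UnitAddTorus.mFourierCoeff (torusRestriction hN w) n =
      ∫ ξ, inner ℂ (bandSpectrum N n ξ) (w ξ) := by
  set g : UnitAddTorus (Fin d) → ℂ := fun θ => UnitAddTorus.mFourier (-n) θ • w (cubeLift N θ)
  have hg : Measurable g :=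
    (UnitAddTorus.mFourier (-n)).continuous.measurable.smul
      ((Lp.stronglyMeasurable w).measurable.comp (measurable_cubeLift N))
  have hmap : (N ^ d : ℝ) • ∫ θ, g θ =
      ∫ ξ in frequencyCube (Fin d) N, g (toTorus N ξ) := by
    rw [← integral_map (measurable_toTorus N).aemeasurable hg.aestronglyMeasurable, map_toTorus hN,
      integral_smul_measure, ENNReal.toReal_ofReal (by positivity), Fintype.card_fin]
  have hcube : (frequencyCube (Fin d) N).indicator
      (fun ξ => (N ^ d : ℝ)⁻¹ • g (toTorus N ξ)) =
      fun ξ => inner ℂ (bandSpectrum N n ξ) (w ξ) := by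
    funext ξ
    by_cases hξ : ξ ∈ frequencyCube (Fin d) N
    · simp only [g, bandSpectrum, Set.indicator_of_mem hξ, cubeLift_toTorus hN.ne' hξ,
        UnitAddTorus.mFourier_neg, mFourier_toTorus, RCLike.inner_apply, map_mul, map_inv₀, map_pow,
        Complex.conj_ofReal, Complex.real_smul, smul_eq_mul]
      push_cast
      ring
    · rw [Set.indicator_of_notMem hξ, bandSpectrum, Set.indicator_of_notMem hξ, inner_zero_left]
  calc UnitAddTorus.mFourierCoeff (torusRestriction hN w) n
      = ∫ θ, g θ := by
        refine integral_congr_ae ?_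
        filter_upwards [coeFn_torusRestriction hN w] with θ hθ
        rw [hθ]
    _ = (N ^ d : ℝ)⁻¹ • ∫ ξ in frequencyCube (Fin d) N, g (toTorus N ξ) := by
        rw [← hmap, inv_smul_smul₀ (by positivity)]
    _ = ∫ ξ, inner ℂ (bandSpectrum N n ξ) (w ξ) := by
        rw [← integral_smul, ← integral_indicator (measurableSet_frequencyCube N), hcube]

theorem mFourierCoeff_torusRestriction_eq_integral_mul_fN (hN : 0 < N)
    {w : EuclideanSpace ℝ (Fin d) →₂[volume] ℂ} {u : EuclideanSpace ℝ (Fin d) → ℝ}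
    (hu : (𝓕 w : EuclideanSpace ℝ (Fin d) →₂[volume] ℂ) =ᵐ[volume] fun x => (u x : ℂ))
    (n : Fin d → ℤ) :
    UnitAddTorus.mFourierCoeff (torusRestriction hN w) n = (∫ x, u x * fN d N n x : ℝ) := by
  rw [mFourierCoeff_torusRestriction, ← integral_complex_ofReal, ← integral_inner_fourier_fourier
    (memLp_one_iff_integrable.1 (memLp_bandSpectrum hN n 1)) (memLp_bandSpectrum hN n 2)]
  refine integral_congr_ae ?_
  filter_upwards [hu] with x hx
  rw [hx, fourier_bandSpectrum hN, RCLike.inner_apply, Complex.conj_ofReal, Complex.ofReal_mul]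

end BandLimited

section Control

variable {d : ℕ} {N t : ℝ}

theorem hasSumL2_re_of_hasSum {F : (Fin d → ℤ) → EuclideanSpace ℝ (Fin d) → ℝ}
    {A : (Fin d → ℤ) → EuclideanSpace ℝ (Fin d) →₂[volume] ℂ}
    {G : EuclideanSpace ℝ (Fin d) →₂[volume] ℂ} (h : HasSum A G)
    (hA : ∀ n, A n =ᵐ[volume] fun x => (F n x : ℂ)) :
    HasSumL2 d F fun x => (G x).re := by
  have hlim := (Lp.tendsto_Lp_iff_tendsto_eLpNorm' _ _).1 h
  refine tendsto_of_tendsto_of_tendsto_of_le_of_le tendsto_const_nhds hlim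
    (fun _ => zero_le) fun s => ?_
  rw [eLpNorm_sub_comm]
  refine eLpNorm_mono_ae ?_
  filter_upwards [Lp.coeFn_finsetSum s A, ae_all_iff.2 hA] with x hsum hAx
  have hre : (G x).re - ∑ n ∈ s, F n x = (G x - (∑ n ∈ s, A n : _ →₂[volume] ℂ) x).re := by
    simp only [hsum, Finset.sum_apply, hAx, Complex.sub_re, Complex.re_sum, Complex.ofReal_re]
  rw [hre]
  exact Complex.abs_re_le_norm _

theorem fourier_heatPeriodize_mFourierLp_ae_eq (hN : 0 < N) (ht : 0 < t) (n : Fin d → ℤ) :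
    (𝓕 (heatPeriodize hN ht (UnitAddTorus.mFourierLp 2 n)) :
        EuclideanSpace ℝ (Fin d) →₂[volume] ℂ)
      =ᵐ[volume] fun x => (heatKer d t (x - latticePt d N n) : ℂ) := by
  have hspec := memLp_two_heatKerSpectrum ht (latticePt d N n)
  have hperiodize : heatPeriodize hN ht (UnitAddTorus.mFourierLp 2 n) = hspec.toLp := by
    refine Lp.ext ?_
    filter_upwards [hspec.coeFn_toLp,
      coeFn_heatPeriodize_of_ae_eq hN ht (UnitAddTorus.coeFn_mFourierLp 2 n)] with ξ hξ hξ'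
    rw [hξ, hξ', mFourier_toTorus, heatKerSpectrum]
  rw [hperiodize]
  filter_upwards [fourier_toLp_ae_eq_s18 (integrable_heatKerSpectrum ht (latticePt d N n)) hspec]
    with x hx
  rw [hx, fourier_heatKerSpectrum ht]

theorem hasSum_fourier_heatPeriodize (hN : 0 < N) (ht : 0 < t)
    (h : UnitAddTorus (Fin d) →₂[volume] ℂ) :
    HasSum (fun n => UnitAddTorus.mFourierCoeff h n •
        (𝓕 (heatPeriodize hN ht (UnitAddTorus.mFourierLp 2 n)) :
          EuclideanSpace ℝ (Fin d) →₂[volume] ℂ))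
      (𝓕 (heatPeriodize hN ht h)) := by
  have hsum := ((UnitAddTorus.hasSum_mFourier_series_L2 h).mapL (heatPeriodize hN ht)).mapL
    ((Lp.fourierTransformₗᵢ (EuclideanSpace ℝ (Fin d)) ℂ).toContinuousLinearEquiv :
      (EuclideanSpace ℝ (Fin d) →₂[volume] ℂ) →L[ℂ] EuclideanSpace ℝ (Fin d) →₂[volume] ℂ)
  simp only [map_smul] at hsum
  exact hsum

/-- The sum `Σ_n v_n G_t(· - n/N)` of the responses to the feedback impulses `v_n`, as a function
of the inverse Fourier transform `w` of the state at the time of the impulses. -/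
def feedbackResponse (hN : 0 < N) (ht : 0 < t) (w : EuclideanSpace ℝ (Fin d) →₂[volume] ℂ) :
    EuclideanSpace ℝ (Fin d) →₂[volume] ℂ :=
  -𝓕 (heatPeriodize hN ht (torusRestriction hN w))

theorem hasSumL2_feedbackResponse (hN : 0 < N) (ht : 0 < t)
    {w : EuclideanSpace ℝ (Fin d) →₂[volume] ℂ} {u : EuclideanSpace ℝ (Fin d) → ℝ}
    (hu : (𝓕 w : EuclideanSpace ℝ (Fin d) →₂[volume] ℂ) =ᵐ[volume] fun x => (u x : ℂ)) :
    HasSumL2 d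
      (fun n x => (-∫ y, u y * fN d N n y) * heatKer d t (x - latticePt d N n))
      fun x => (feedbackResponse hN ht w x).re := by
  refine hasSumL2_re_of_hasSum (hasSum_fourier_heatPeriodize hN ht (torusRestriction hN w)).neg
    fun n => ?_
  rw [mFourierCoeff_torusRestriction_eq_integral_mul_fN hN hu, ← neg_smul]
  filter_upwards [Lp.coeFn_smul (-((∫ x, u x * fN d N n x : ℝ) : ℂ))
    (𝓕 (heatPeriodize hN ht (UnitAddTorus.mFourierLp 2 n)) :
      EuclideanSpace ℝ (Fin d) →₂[volume] ℂ),
    fourier_heatPeriodize_mFourierLp_ae_eq hN ht n] with x hsmul hx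
  rw [hsmul, Pi.smul_apply, hx, smul_eq_mul]
  push_cast
  rfl

end Control

section Error

variable {ι : Type*} [Fintype ι] {N t : ℝ}

theorem setLIntegral_compl_heatMul_le (hN : 0 < N) (ht : 0 ≤ t)
    (w : EuclideanSpace ℝ ι →₂[volume] ℂ) :
    ∫⁻ ξ in (frequencyCube ι N)ᶜ, ‖heatMul ht w ξ‖ₑ ^ 2 ≤
      aliasingSum ι (π ^ 2 * (2 * t) * N ^ 2) * ‖w‖ₑ ^ 2 := by
  have hw : Measurable fun ξ => ‖w ξ‖ₑ ^ 2 :=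
    (Lp.stronglyMeasurable w).measurable.enorm.pow_const 2
  rw [enorm_sq_eq_lintegral, ← lintegral_const_mul _ hw]
  refine le_trans ?_ (setLIntegral_le_lintegral (frequencyCube ι N)ᶜ _)
  refine setLIntegral_mono_ae' (measurableSet_frequencyCube N).compl ?_
  filter_upwards [coeFn_heatMul ht w] with ξ hξ hξQ
  rw [hξ, enorm_heatSymbol_mul_sq]
  gcongr
  exact ofReal_heatSymbol_le_aliasingSum hN (by positivity) hξQ

theorem setLIntegral_compl_heatPeriodize_le (hN : 0 < N) (ht : 0 < t)
    (w : EuclideanSpace ℝ ι →₂[volume] ℂ) :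
    ∫⁻ ξ in (frequencyCube ι N)ᶜ, ‖heatPeriodize hN ht (torusRestriction hN w) ξ‖ₑ ^ 2 ≤
      aliasingSum ι (π ^ 2 * (2 * t) * N ^ 2) * ‖w‖ₑ ^ 2 := by
  have hmeas : Measurable fun θ => ‖torusRestriction hN w θ‖ₑ ^ 2 :=
    (Lp.stronglyMeasurable (torusRestriction hN w)).measurable.enorm.pow_const 2
  calc ∫⁻ ξ in (frequencyCube ι N)ᶜ, ‖heatPeriodize hN ht (torusRestriction hN w) ξ‖ₑ ^ 2
      = ∫⁻ ξ in (frequencyCube ι N)ᶜ, ENNReal.ofReal (heatSymbol (2 * t) ξ) *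
          ‖torusRestriction hN w (toTorus N ξ)‖ₑ ^ 2 := by
        refine lintegral_congr_ae (ae_restrict_of_ae ?_)
        filter_upwards [coeFn_heatPeriodize hN ht (torusRestriction hN w)] with ξ hξ
        rw [hξ, enorm_heatSymbol_mul_sq]
    _ ≤ aliasingSum ι (π ^ 2 * (2 * t) * N ^ 2) *
          (ENNReal.ofReal (N ^ Fintype.card ι) * ∫⁻ θ, ‖torusRestriction hN w θ‖ₑ ^ 2) :=
        setLIntegral_compl_frequencyCube_le hN (by positivity) hmeas
    _ ≤ aliasingSum ι (π ^ 2 * (2 * t) * N ^ 2) * ‖w‖ₑ ^ 2 := by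
        rw [← enorm_sq_eq_lintegral]
        gcongr
        exact enorm_torusRestriction_sq_le hN w

theorem setLIntegral_heatMul_sub_heatPeriodize_eq_zero (hN : 0 < N) (ht : 0 < t)
    (w : EuclideanSpace ℝ ι →₂[volume] ℂ) :
    ∫⁻ ξ in frequencyCube ι N,
      ‖heatMul ht.le w ξ - heatPeriodize hN ht (torusRestriction hN w) ξ‖ₑ ^ 2 = 0 := by
  refine (setLIntegral_congr_fun_ae (measurableSet_frequencyCube N) ?_).trans lintegral_zero
  filter_upwards [coeFn_heatMul ht.le w,
    coeFn_heatPeriodize_of_ae_eq hN ht (coeFn_torusRestriction hN w)] with ξ hmul hper hξ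
  rw [hmul, hper, cubeLift_toTorus hN.ne' hξ, sub_self, enorm_zero, zero_pow two_ne_zero]

theorem enorm_heatMul_sub_heatPeriodize_sq_le (hN : 0 < N) (ht : 0 < t)
    (w : EuclideanSpace ℝ ι →₂[volume] ℂ) :
    ‖heatMul ht.le w - heatPeriodize hN ht (torusRestriction hN w)‖ₑ ^ 2 ≤
      4 * aliasingSum ι (π ^ 2 * (2 * t) * N ^ 2) * ‖w‖ₑ ^ 2 := by
  set f := heatMul ht.le w
  set g := heatPeriodize hN ht (torusRestriction hN w)
  have hf : Measurable fun ξ => 2 * ‖f ξ‖ₑ ^ 2 :=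
    ((Lp.stronglyMeasurable f).measurable.enorm.pow_const 2).const_mul 2
  calc ‖f - g‖ₑ ^ 2
      = ∫⁻ ξ, ‖f ξ - g ξ‖ₑ ^ 2 := by
        rw [enorm_sq_eq_lintegral]
        refine lintegral_congr_ae ?_
        filter_upwards [Lp.coeFn_sub f g] with ξ hξ
        rw [hξ, Pi.sub_apply]
    _ = ∫⁻ ξ in (frequencyCube ι N)ᶜ, ‖f ξ - g ξ‖ₑ ^ 2 := by
        rw [← lintegral_add_compl _ (measurableSet_frequencyCube N),
          setLIntegral_heatMul_sub_heatPeriodize_eq_zero, zero_add]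
    _ ≤ ∫⁻ ξ in (frequencyCube ι N)ᶜ, 2 * ‖f ξ‖ₑ ^ 2 + 2 * ‖g ξ‖ₑ ^ 2 :=
        lintegral_mono fun ξ => enorm_sub_sq_le _ _
    _ = 2 * (∫⁻ ξ in (frequencyCube ι N)ᶜ, ‖f ξ‖ₑ ^ 2) +
          2 * ∫⁻ ξ in (frequencyCube ι N)ᶜ, ‖g ξ‖ₑ ^ 2 := by
        rw [lintegral_add_left hf, lintegral_const_mul' _ _ ENNReal.ofNat_ne_top,
          lintegral_const_mul' _ _ ENNReal.ofNat_ne_top]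
    _ ≤ 2 * (aliasingSum ι (π ^ 2 * (2 * t) * N ^ 2) * ‖w‖ₑ ^ 2) +
          2 * (aliasingSum ι (π ^ 2 * (2 * t) * N ^ 2) * ‖w‖ₑ ^ 2) := by
        gcongr
        · exact setLIntegral_compl_heatMul_le hN ht.le w
        · exact setLIntegral_compl_heatPeriodize_le hN ht w
    _ = 4 * aliasingSum ι (π ^ 2 * (2 * t) * N ^ 2) * ‖w‖ₑ ^ 2 := by ring

end Error

section FinalState

variable {d : ℕ} {N t τ : ℝ} {y₀ : EuclideanSpace ℝ (Fin d) → ℝ}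

theorem fourier_heatMul_sub_heatPeriodize_ae_eq (hy : MemLp y₀ 2 volume) (hτ : 0 < τ) (ht : 0 < t)
    (hN : 0 < N) :
    let w := heatMul hτ.le (fourierInvReal hy)
    (𝓕 (heatMul ht.le w - heatPeriodize hN ht (torusRestriction hN w)) :
        EuclideanSpace ℝ (Fin d) →₂[volume] ℂ)
      =ᵐ[volume] fun x => (heatSol d y₀ (t + τ) x : ℂ) + feedbackResponse hN ht w x := by
  intro w
  have hstate := fourier_heatMul_ae_eq_heatSol hy (add_pos ht hτ)
  rw [← heatMul_heatMul ht.le hτ.le] at hstate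
  have hsplit : 𝓕 (heatMul ht.le w - heatPeriodize hN ht (torusRestriction hN w)) =
      𝓕 (heatMul ht.le w) + feedbackResponse hN ht w :=
    ((Lp.fourierTransformₗᵢ (EuclideanSpace ℝ (Fin d)) ℂ).map_sub _ _).trans (sub_eq_add_neg _ _)
  rw [hsplit]
  filter_upwards [Lp.coeFn_add (𝓕 (heatMul ht.le w)) (feedbackResponse hN ht w), hstate]
    with x hadd hx
  rw [hadd, Pi.add_apply, hx]

theorem l2norm_heatSol_add_feedbackResponse_le (hy : MemLp y₀ 2 volume) (hτ : 0 < τ) (ht : 0 < t)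
    (hN : 0 < N) :
    l2norm d (fun x => heatSol d y₀ (t + τ) x +
        (feedbackResponse hN ht (heatMul hτ.le (fourierInvReal hy)) x).re) ≤
      √(4 * aliasingSum (Fin d) (π ^ 2 * (2 * t) * N ^ 2)).toReal * l2norm d y₀ := by
  set w := heatMul hτ.le (fourierInvReal hy)
  set e := heatMul ht.le w - heatPeriodize hN ht (torusRestriction hN w)
  have hb : 0 < π ^ 2 * (2 * t) * N ^ 2 := by positivity
  have he : ‖e‖ ≤ √(4 * aliasingSum (Fin d) (π ^ 2 * (2 * t) * N ^ 2)).toReal * ‖w‖ :=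
    norm_le_sqrt_mul_norm (ENNReal.mul_ne_top ENNReal.ofNat_ne_top (aliasingSum_ne_top hb))
      (enorm_heatMul_sub_heatPeriodize_sq_le hN ht w)
  have hw : ‖w‖ ≤ l2norm d y₀ := (norm_heatMul_le hτ.le _).trans_eq (norm_fourierInvReal hy)
  calc l2norm d (fun x => heatSol d y₀ (t + τ) x + (feedbackResponse hN ht w x).re)
      ≤ ‖𝓕 e‖ := by
        refine ENNReal.toReal_mono (Lp.eLpNorm_ne_top _) (eLpNorm_mono_ae ?_)
        filter_upwards [fourier_heatMul_sub_heatPeriodize_ae_eq hy hτ ht hN] with x hx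
        rw [hx, ← Complex.ofReal_re (heatSol d y₀ (t + τ) x), ← Complex.add_re, Complex.ofReal_re]
        exact Complex.abs_re_le_norm _
    _ = ‖e‖ := Lp.norm_fourier_eq e
    _ ≤ √(4 * aliasingSum (Fin d) (π ^ 2 * (2 * t) * N ^ 2)).toReal * l2norm d y₀ :=
        he.trans (by gcongr)

end FinalState

section SamplingRate

variable {ι : Type*} [Fintype ι]

theorem sqrt_four_mul_aliasingSum_le {b ε : ℝ} (hb : 2 ≤ b) (hε : 0 < ε)
    (h : Real.log (4 * latticeGaussianSum ι / ε ^ 2) ≤ b / 2) :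
    √(4 * aliasingSum ι b).toReal ≤ ε := by
  have hK : 0 < latticeGaussianSum ι := zero_lt_one.trans_le (one_le_latticeGaussianSum ι)
  have hexp : 4 * (Real.exp (-b / 2) * latticeGaussianSum ι) ≤ ε ^ 2 := by
    have hle := (Real.log_le_iff_le_exp (by positivity)).1 h
    rw [div_le_iff₀ (by positivity)] at hle
    rw [neg_div, Real.exp_neg]
    field_simp
    linarith
  have hsum : (aliasingSum ι b).toReal ≤ Real.exp (-b / 2) * latticeGaussianSum ι :=
    ENNReal.toReal_le_of_le_ofReal (by positivity) (aliasingSum_le hb)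
  rw [Real.sqrt_le_left hε.le, ENNReal.toReal_mul, ENNReal.toReal_ofNat]
  linarith

variable (ι) in
/-- The constant `C₁` of the sampling condition `N ≥ C₁ √((1 + ln(1/ε)) / t)`, chosen so that
`C₁² (1 + ln(1/ε))` dominates both `1` and `ln(4 K / ε²)`, with `K` the lattice Gaussian sum. -/
def samplingConst : ℝ :=
  √(2 + Real.log (4 * latticeGaussianSum ι))

theorem log_four_mul_latticeGaussianSum_pos : 0 < Real.log (4 * latticeGaussianSum ι) :=
  Real.log_pos (by linarith [one_le_latticeGaussianSum ι])

theorem samplingConst_pos : 0 < samplingConst ι :=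
  Real.sqrt_pos.2 (by linarith [log_four_mul_latticeGaussianSum_pos (ι := ι)])

theorem max_one_log_le_samplingConst_sq_mul {ε : ℝ} (hε : ε ∈ Set.Ioo (0 : ℝ) 1) :
    max 1 (Real.log (4 * latticeGaussianSum ι / ε ^ 2)) ≤
      samplingConst ι ^ 2 * (1 + Real.log (1 / ε)) := by
  have hK := log_four_mul_latticeGaussianSum_pos (ι := ι)
  have hlog : 0 < Real.log (1 / ε) := Real.log_pos ((one_lt_div hε.1).2 hε.2)
  have hsplit : Real.log (4 * latticeGaussianSum ι / ε ^ 2) =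
      Real.log (4 * latticeGaussianSum ι) + 2 * Real.log (1 / ε) := by
    have hK1 := one_le_latticeGaussianSum ι
    rw [Real.log_div (by positivity) (pow_ne_zero 2 hε.1.ne'), Real.log_pow, one_div,
      Real.log_inv]
    push_cast
    ring
  rw [samplingConst, Real.sq_sqrt (by linarith), hsplit]
  exact max_le (by nlinarith) (by nlinarith)

theorem pos_of_samplingConst_mul_sqrt_le {N t ε : ℝ} (ht : 0 < t) (hε : ε ∈ Set.Ioo (0 : ℝ) 1)
    (hN : samplingConst ι * √(1 / t * (1 + Real.log (1 / ε))) ≤ N) : 0 < N := by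
  have hlog : 0 < Real.log (1 / ε) := Real.log_pos ((one_lt_div hε.1).2 hε.2)
  have hC := samplingConst_pos (ι := ι)
  exact lt_of_lt_of_le (by positivity) hN

theorem sqrt_four_mul_aliasingSum_le_of_samplingConst_mul_sqrt_le {N t ε : ℝ} (ht : 0 < t)
    (hε : ε ∈ Set.Ioo (0 : ℝ) 1)
    (hN : samplingConst ι * √(1 / t * (1 + Real.log (1 / ε))) ≤ N) :
    √(4 * aliasingSum ι (π ^ 2 * (2 * t) * N ^ 2)).toReal ≤ ε := by
  have hlog : 0 < Real.log (1 / ε) := Real.log_pos ((one_lt_div hε.1).2 hε.2)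
  have hC := samplingConst_pos (ι := ι)
  have hsq : samplingConst ι ^ 2 * (1 + Real.log (1 / ε)) ≤ t * N ^ 2 := by
    have h := pow_le_pow_left₀ (by positivity) hN 2
    rw [mul_pow, Real.sq_sqrt (by positivity)] at h
    calc samplingConst ι ^ 2 * (1 + Real.log (1 / ε))
        = t * (samplingConst ι ^ 2 * (1 / t * (1 + Real.log (1 / ε)))) := by field_simp
      _ ≤ t * N ^ 2 := by gcongr
  obtain ⟨hone, hlogK⟩ := max_le_iff.1 ((max_one_log_le_samplingConst_sq_mul hε).trans hsq)
  have hπ : t * N ^ 2 ≤ π ^ 2 * (t * N ^ 2) :=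
    le_mul_of_one_le_left (by positivity) (one_le_pow₀ (by linarith [Real.pi_gt_three]))
  exact sqrt_four_mul_aliasingSum_le (by linarith) hε.1 (by linarith)

end SamplingRate

/-- Feedback null approximate controllability: there is `C₁ = C₁(d) > 0` such that for any
`0 < τ < T`, `ε ∈ (0,1)`, `y₀ ∈ L²(ℝ^d)` and `N ≥ C₁ √((1/(T-τ))(1 + ln(1/ε)))`, with the
feedback coefficients `v_n = -⟨e^{τΔ}y₀, f_{N,n}⟩`, the family `(v_n G_{T-τ}(· - n/N))_n`
is summable in `L²(ℝ^d)` and the state `y(T,·) = e^{TΔ}y₀ + Σ_n v_n G_{T-τ}(· - n/N)`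
satisfies `‖y(T,·)‖ ≤ ε ‖y₀‖`. -/
theorem statement18 (d : ℕ) (hd : 0 < d) :
    ∃ C₁ : ℝ, 0 < C₁ ∧
      ∀ T τ : ℝ, 0 < τ → τ < T →
      ∀ ε : ℝ, ε ∈ Set.Ioo (0 : ℝ) 1 →
      ∀ y₀ : EuclideanSpace ℝ (Fin d) → ℝ, MemLp y₀ 2 volume →
      ∀ N : ℝ, C₁ * Real.sqrt ((1 / (T - τ)) * (1 + Real.log (1 / ε))) ≤ N →
        ∃ S : EuclideanSpace ℝ (Fin d) → ℝ, MemLp S 2 volume ∧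
          HasSumL2 d
            (fun n x => (-∫ y, heatSol d y₀ τ y * fN d N n y) *
              heatKer d (T - τ) (x - latticePt d N n)) S ∧
          l2norm d (fun x => heatSol d y₀ T x + S x) ≤ ε * l2norm d y₀ := by
  refine ⟨samplingConst (Fin d), samplingConst_pos, ?_⟩
  intro T τ hτ hτT ε hε y₀ hy N hN
  have ht : 0 < T - τ := sub_pos.2 hτT
  have hN₀ : 0 < N := pos_of_samplingConst_mul_sqrt_le ht hε hN
  set w := heatMul hτ.le (fourierInvReal hy)
  refine ⟨fun x => (feedbackResponse hN₀ ht w x).re, (Lp.memLp (feedbackResponse hN₀ ht w)).re,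
    hasSumL2_feedbackResponse hN₀ ht (fourier_heatMul_ae_eq_heatSol hy hτ), ?_⟩
  calc l2norm d (fun x => heatSol d y₀ T x + (feedbackResponse hN₀ ht w x).re)
      ≤ √(4 * aliasingSum (Fin d) (π ^ 2 * (2 * (T - τ)) * N ^ 2)).toReal * l2norm d y₀ := by
        simpa only [sub_add_cancel] using l2norm_heatSol_add_feedbackResponse_le hy hτ ht hN₀
    _ ≤ ε * l2norm d y₀ := by
        gcongr
        · exact ENNReal.toReal_nonneg
        · exact sqrt_four_mul_aliasingSum_le_of_samplingConst_mul_sqrt_le ht hε hN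
end
end
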